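/- Let Ω ⊂ ℝⁿ be a bounded Lipschitz domain, let F ∈ C¹(ℝ^{N×n}) be convex with ν|z| − L ≤ F(z) ≤ L(1+|z|) for all z, and let T₀ ∈ L^∞(Ω;ℝ^{N×n}) satisfy ess inf_{x∈Ω} min_{|ξ|=1} (F^∞(ξ) − T₀(x)·ξ) > 0. If (u_k) is any minimising sequence of 𝓕[w] = ∫_Ω (F(∇w) − T₀·∇w) dx in W^{1,1}(Ω;ℝ^N), then the sequence (D_z F(∇u_k) − T₀) converges weakly-* in L^∞(Ω;ℝ^{N×n}) to the unique maximiser σ of the dual functional ℛ_{T₀}[χ] = −∫_Ω F*(T₀ + χ) dx over L^∞_⊥(Ω;ℝ^{N×n}). -/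

import Mathlib

open MeasureTheory Filter Topology Set
open scoped ENNReal RealInnerProductSpace

noncomputable section

/-- Euclidean space `ℝⁿ`. -/
abbrev EVec (n : ℕ) := EuclideanSpace ℝ (Fin n)

/-- Frobenius inner product of two "matrices". -/
def mdot {ι κ : Type*} [Fintype ι] [Fintype κ] (A B : ι → κ → ℝ) : ℝ :=
  ∑ a, ∑ i, A a i * B a i

/-- Frobenius norm. -/
noncomputable def mnorm {ι κ : Type*} [Fintype ι] [Fintype κ] (A : ι → κ → ℝ) : ℝ :=
  Real.sqrt (mdot A A)

/-- Euclidean norm of a vector given as a tuple. -/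
noncomputable def vnorm {ι : Type*} [Fintype ι] (v : ι → ℝ) : ℝ :=
  Real.sqrt (∑ a, v a ^ 2)

/-- `Ω ⊆ ℝⁿ` is a (nonempty, open, connected) Lipschitz domain: every boundary point has
a neighbourhood on which `Ω` can be flattened to a half space by a bi-Lipschitz map. -/
def IsLipschitzDomain {n : ℕ} (Ω : Set (EVec n)) : Prop :=
  IsOpen Ω ∧ Ω.Nonempty ∧ IsConnected Ω ∧
  ∀ x ∈ frontier Ω, ∃ (U : Set (EVec n)) (h hinv : EVec n → EVec n) (K : NNReal)
      (e : EVec n),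
    ‖e‖ = 1 ∧ IsOpen U ∧ x ∈ U ∧ LipschitzOnWith K h U ∧
    LipschitzOnWith K hinv (h '' U) ∧ (∀ y ∈ U, hinv (h y) = y) ∧
    h '' (U ∩ Ω) = (h '' U) ∩ {y : EVec n | 0 < ⟪e, y⟫}

/-- `Du` is the weak (distributional) gradient of `u` on `Ω`, and both are integrable;
i.e. `u ∈ W^{1,1}(Ω; ℝ^ι)` with weak gradient `Du`. -/
def HasWeakDerivOn {n : ℕ} {ι : Type*} [Fintype ι] (Ω : Set (EVec n))
    (u : EVec n → ι → ℝ) (Du : EVec n → ι → Fin n → ℝ) : Prop :=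
  IntegrableOn u Ω volume ∧ IntegrableOn Du Ω volume ∧
  ∀ φ : EVec n → ℝ, ContDiff ℝ 1 φ → HasCompactSupport φ → tsupport φ ⊆ Ω →
    ∀ (a : ι) (i : Fin n),
      ∫ x in Ω, u x a * fderiv ℝ φ x (EuclideanSpace.single i 1) =
        - ∫ x in Ω, Du x a i * φ x

/-- `u ∈ W^{1,2}(Ω;ℝ^ι)` with weak gradient `Du`. -/
def MemW12 {n : ℕ} {ι : Type*} [Fintype ι] (Ω : Set (EVec n))
    (u : EVec n → ι → ℝ) (Du : EVec n → ι → Fin n → ℝ) : Prop :=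
  HasWeakDerivOn Ω u Du ∧ IntegrableOn (fun x => vnorm (u x) ^ 2) Ω volume ∧
    IntegrableOn (fun x => mnorm (Du x) ^ 2) Ω volume

/-- vanishing mean value `(u)_Ω = 0`. -/
def ZeroMean {n : ℕ} {ι : Type*} [Fintype ι] (Ω : Set (EVec n))
    (u : EVec n → ι → ℝ) : Prop :=
  ∀ a : ι, ∫ x in Ω, u x a = 0

/-- The `L^∞(Ω)` norm of a matrix field (w.r.t. the pointwise Frobenius norm). -/
noncomputable def linfNormOn {n N : ℕ} (Ω : Set (EVec n))
    (T : EVec n → Fin N → Fin n → ℝ) : ℝ≥0∞ :=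
  essSup (fun x => ENNReal.ofReal (mnorm (T x))) (volume.restrict Ω)

/-- `T ∈ W^{1,∞}(Ω)`: bounded and Lipschitz on `Ω`. -/
def MemW1inf {n N : ℕ} (Ω : Set (EVec n)) (T : EVec n → Fin N → Fin n → ℝ) : Prop :=
  ∃ C : NNReal, (∀ x ∈ Ω, ‖T x‖ ≤ C) ∧ LipschitzOnWith C T Ω

/-- `T ∈ W^{2,∞}(Ω)`: `T` is bounded with bounded Lipschitz derivative on `Ω`. -/
def MemW2inf {n N : ℕ} (Ω : Set (EVec n)) (T : EVec n → Fin N → Fin n → ℝ) : Prop :=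
  ∃ (C : NNReal) (DT : EVec n → EVec n →L[ℝ] (Fin N → Fin n → ℝ)),
    (∀ x ∈ Ω, ‖T x‖ ≤ C) ∧ (∀ x ∈ Ω, HasFDerivWithinAt T (DT x) Ω x) ∧
    (∀ x ∈ Ω, ‖DT x‖ ≤ C) ∧ LipschitzOnWith C DT Ω

/-- The nonlinear map `A(z) = f'(|z|) z / |z|` (equal to `0` at `z = 0`). -/
noncomputable def Amap {N n : ℕ} (f' : ℝ → ℝ) (z : Fin N → Fin n → ℝ) :
    Fin N → Fin n → ℝ :=
  fun a i => (f' (mnorm z) / mnorm z) * z a i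

/-- `u` is a weak solution of the Neumann problem for the integrand `f(|·|)` and datum `T₀`. -/
def IsWeakSolution {n N : ℕ} (Ω : Set (EVec n)) (f' : ℝ → ℝ)
    (T₀ : EVec n → Fin N → Fin n → ℝ)
    (u : EVec n → Fin N → ℝ) (Du : EVec n → Fin N → Fin n → ℝ) : Prop :=
  HasWeakDerivOn Ω u Du ∧
  ∀ φ Dφ, HasWeakDerivOn Ω φ Dφ →
    ∫ x in Ω, mdot (Amap f' (Du x)) (Dφ x) = ∫ x in Ω, mdot (T₀ x) (Dφ x)

/-- The functional `𝔉[w] = ∫_Ω (f(|∇w|) − T₀ · ∇w) dx` (as a function of the gradient). -/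
noncomputable def FF {n N : ℕ} (Ω : Set (EVec n)) (f : ℝ → ℝ)
    (T₀ : EVec n → Fin N → Fin n → ℝ) (Du : EVec n → Fin N → Fin n → ℝ) : ℝ :=
  ∫ x in Ω, (f (mnorm (Du x)) - mdot (T₀ x) (Du x))

/-- The regularised functional `𝔉_k[w] = 𝔉[w] + (2k)⁻¹ ∫_Ω |∇w|² dx`. -/
noncomputable def FFk {n N : ℕ} (Ω : Set (EVec n)) (f : ℝ → ℝ)
    (T₀ : EVec n → Fin N → Fin n → ℝ) (k : ℕ)
    (Du : EVec n → Fin N → Fin n → ℝ) : ℝ :=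
  FF Ω f T₀ Du + (2 * (k : ℝ))⁻¹ * ∫ x in Ω, mnorm (Du x) ^ 2

end

/-- The functional `𝓕[w] = ∫_Ω (F(∇w) − T₀·∇w) dx` for a general integrand `F`. -/
noncomputable def FFgen {n N : ℕ} (Ω : Set (EVec n)) (F : (Fin N → Fin n → ℝ) → ℝ)
    (T₀ : EVec n → Fin N → Fin n → ℝ) (Du : EVec n → Fin N → Fin n → ℝ) : ℝ :=
  ∫ x in Ω, (F (Du x) - mdot (T₀ x) (Du x))

/-- The elementary matrix with a `1` in position `(a,i)`. -/
def basisMat {N n : ℕ} (a : Fin N) (i : Fin n) : Fin N → Fin n → ℝ :=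
  fun a' i' => if a' = a ∧ i' = i then 1 else 0

/-- The gradient `D_z F(z)` of `F : ℝ^{N×n} → ℝ`, as a matrix. -/
noncomputable def DFmat {N n : ℕ} (F : (Fin N → Fin n → ℝ) → ℝ)
    (z : Fin N → Fin n → ℝ) : Fin N → Fin n → ℝ :=
  fun a i => fderiv ℝ F z (basisMat a i)

/-- `χ ∈ L^∞_⊥(Ω;ℝ^{N×n})`: a bounded measurable matrix field which annihilates all
`W^{1,1}`-gradients. -/
def MemLinfPerp {n N : ℕ} (Ω : Set (EVec n)) (χ : EVec n → Fin N → Fin n → ℝ) : Prop :=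
  AEStronglyMeasurable χ (volume.restrict Ω) ∧ (∃ C : ℝ, ∀ x ∈ Ω, mnorm (χ x) ≤ C) ∧
  ∀ (w : EVec n → Fin N → ℝ) (Dw : EVec n → Fin N → Fin n → ℝ),
    HasWeakDerivOn Ω w Dw → ∫ x in Ω, mdot (χ x) (Dw x) = 0

/-- The shifted convex conjugate `F*(z*) + F(0) = sup_w (z*·w − F(w) + F(0)) ∈ [0,∞]`,
valued in `ℝ≥0∞` so that infeasible points (`F*(z*) = ∞`) are handled correctly. -/
noncomputable def FstarShift {N n : ℕ} (F : (Fin N → Fin n → ℝ) → ℝ)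
    (z : Fin N → Fin n → ℝ) : ℝ≥0∞ :=
  ⨆ w : Fin N → Fin n → ℝ, ENNReal.ofReal (mdot z w - F w + F 0)

/-- The dual functional `ℛ_{T₀}[χ] = −∫_Ω F*(T₀+χ) dx`, valued in `EReal` (it equals
`F(0)·|Ω| − ∫_Ω (F*(T₀+χ) + F(0)) dx`, where the last integrand is nonnegative and the
value is `−∞` if `F*(T₀+χ)` is not integrable). -/
noncomputable def Rdual {n N : ℕ} (Ω : Set (EVec n)) (F : (Fin N → Fin n → ℝ) → ℝ)
    (T₀ χ : EVec n → Fin N → Fin n → ℝ) : EReal :=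
  ((F 0 * (volume Ω).toReal : ℝ) : EReal) -
    ((∫⁻ x in Ω, FstarShift F (T₀ x + χ x) : ℝ≥0∞) : EReal)

/-!
The problem is one about a convex Lipschitz integrand `F` on a Euclidean space `E` and a subspace
`V ⊆ L¹(μ; E)`, here the weak gradients. Coerciveness of `F - T₀` makes the infimum `m` of the
energy finite and minimising sequences bounded in `L¹`. By the Hahn–Banach theorem the energy
is bounded below by `m` plus a functional vanishing on `V`; representing that functional by
`σ ∈ L^∞_⊥` and exchanging supremum and integral gives strong duality `ℛ[σ] = m`.

For a dual maximiser `σ`, strong duality says that the Fenchel–Young defects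
`F*(T₀ + σ) + F(∇u_k) - (T₀ + σ) · ∇u_k ≥ 0` have integrals tending to `0`, so they tend to `0`
in measure. A point where the defect vanishes has gradient `T₀ + σ`, so by compactness
`D_zF(∇u_k) → T₀ + σ` in measure on the sets where `∇u_k` stays bounded, and the `L¹` bound makes
the remaining sets small. As the stresses are uniformly bounded, they converge weakly-*, and as
every maximiser is the limit of the same sequence, the maximiser is unique.
-/

open scoped NNReal Gradient

section LinearGrowth

variable {E : Type*} [NormedAddCommGroup E] [NormedSpace ℝ E] {F Finf : E → ℝ} {L : ℝ≥0}

theorem lipschitzWith_of_convexOn_of_le {C : ℝ} (hF : ConvexOn ℝ univ F)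
    (hle : ∀ z, F z ≤ C + L * ‖z‖) : LipschitzWith L F := by
  refine LipschitzWith.of_le_add_mul L fun z w => ?_
  have bound : ∀ t ∈ Ioo (0 : ℝ) 1,
      F z ≤ (1 - t) * F w + t * (C + L * ‖w‖) + L * dist z w := by
    rintro t ⟨ht₀, ht₁⟩
    have hz : z = (1 - t) • w + t • (w + t⁻¹ • (z - w)) := by
      rw [smul_add, smul_inv_smul₀ ht₀.ne']
      module
    have hnorm : ‖w + t⁻¹ • (z - w)‖ ≤ ‖w‖ + t⁻¹ * dist z w := by
      refine (norm_add_le _ _).trans_eq ?_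
      rw [norm_smul, Real.norm_of_nonneg (inv_nonneg.2 ht₀.le), dist_eq_norm]
    calc F z = F ((1 - t) • w + t • (w + t⁻¹ • (z - w))) := congrArg F hz
      _ ≤ (1 - t) * F w + t * F (w + t⁻¹ • (z - w)) :=
        hF.2 (mem_univ _) (mem_univ _) (by linarith) ht₀.le (by ring)
      _ ≤ (1 - t) * F w + t * (C + L * (‖w‖ + t⁻¹ * dist z w)) := by
        gcongr
        exact (hle _).trans (by gcongr)
      _ = (1 - t) * F w + t * (C + L * ‖w‖) + L * dist z w := by
        field_simp
        ring
  have lim : Tendsto (fun t : ℝ => (1 - t) * F w + t * (C + L * ‖w‖) + L * dist z w) (𝓝[>] 0)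
      (𝓝 (F w + L * dist z w)) :=
    (Continuous.tendsto' (by fun_prop) 0 _ (by simp)).mono_left nhdsWithin_le_nhds
  exact ge_of_tendsto lim (eventually_of_mem (Ioo_mem_nhdsGT one_pos) bound)

/-- `Finf` is the recession function of `F`, i.e. `Finf z = lim_{t ↘ 0} t F(z/t)`. -/
def IsRecessionFunction (F Finf : E → ℝ) : Prop :=
  ∀ z, Tendsto (fun t : ℝ => t * F (t⁻¹ • z)) (𝓝[>] 0) (𝓝 (Finf z))

namespace IsRecessionFunction

theorem comp_linearMap {G : Type*} [NormedAddCommGroup G] [NormedSpace ℝ G]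
    (h : IsRecessionFunction F Finf) (g : G →ₗ[ℝ] E) :
    IsRecessionFunction (F ∘ g) (Finf ∘ g) := fun z => by
  simpa only [Function.comp_apply, map_smul] using h (g z)

theorem lipschitzWith_rescale (hF : LipschitzWith L F) {t : ℝ} (ht : 0 < t) :
    LipschitzWith L fun z => t * F (t⁻¹ • z) := by
  refine LipschitzWith.of_dist_le_mul fun z w => ?_
  calc dist (t * F (t⁻¹ • z)) (t * F (t⁻¹ • w))
      = t * dist (F (t⁻¹ • z)) (F (t⁻¹ • w)) := by
        rw [← smul_eq_mul, ← smul_eq_mul, dist_smul₀, Real.norm_of_nonneg ht.le]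
    _ ≤ t * (L * dist (t⁻¹ • z) (t⁻¹ • w)) := by gcongr; exact hF.dist_le_mul _ _
    _ = L * dist z w := by
        rw [dist_smul₀, norm_inv, Real.norm_of_nonneg ht.le]
        field_simp

theorem lipschitzWith (h : IsRecessionFunction F Finf) (hF : LipschitzWith L F) :
    LipschitzWith L Finf :=
  LipschitzWith.of_dist_le_mul fun z w =>
    le_of_tendsto (x := 𝓝[>] (0 : ℝ)) ((h z).dist (h w)) <|
      eventually_mem_nhdsWithin.mono fun _ ht => (lipschitzWith_rescale hF ht).dist_le_mul z w

theorem eventually_forall_sphere [FiniteDimensional ℝ E] (h : IsRecessionFunction F Finf)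
    (hF : LipschitzWith L F) {ε : ℝ} (hε : 0 < ε) :
    ∀ᶠ t in 𝓝[>] (0 : ℝ), ∀ ξ ∈ Metric.sphere (0 : E) 1, Finf ξ - ε ≤ t * F (t⁻¹ • ξ) := by
  have := FiniteDimensional.proper_real E
  refine (isCompact_sphere (0 : E) 1).induction_on
    (p := fun s => ∀ᶠ t in 𝓝[>] (0 : ℝ), ∀ ξ ∈ s, Finf ξ - ε ≤ t * F (t⁻¹ • ξ))
    (by simp) (fun s₁ s₂ hs h₂ => h₂.mono fun t ht ξ hξ => ht ξ (hs hξ))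
    (fun s₁ s₂ h₁ h₂ => by
      filter_upwards [h₁, h₂] with t ht₁ ht₂ ξ hξ using hξ.elim (ht₁ ξ) (ht₂ ξ)) fun ξ₀ _ => ?_
  have near : {ξ | L * dist ξ ξ₀ < ε / 3} ∈ 𝓝 ξ₀ :=
    (Continuous.tendsto' (by fun_prop) ξ₀ 0 (by simp)).eventually_lt_const (by positivity)
  refine ⟨_, mem_nhdsWithin_of_mem_nhds near, ?_⟩
  filter_upwards [(h ξ₀).eventually_const_lt (show Finf ξ₀ - ε / 3 < Finf ξ₀ by linarith),
    eventually_mem_nhdsWithin] with t hlim ht ξ (hξ : L * dist ξ ξ₀ < ε / 3)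
  have h₁ := (h.lipschitzWith hF).le_add_mul ξ ξ₀
  have h₂ := (lipschitzWith_rescale hF ht).le_add_mul ξ₀ ξ
  rw [dist_comm] at h₂
  linarith

theorem exists_sub_le [FiniteDimensional ℝ E] (h : IsRecessionFunction F Finf)
    (hF : LipschitzWith L F) {ε : ℝ} (hε : 0 < ε) :
    ∃ C, ∀ z, ‖z‖ * (Finf (‖z‖⁻¹ • z) - ε) - C ≤ F z := by
  obtain ⟨r, hr, hsphere⟩ : ∃ r > 0, ∀ t ∈ Ioo 0 r, ∀ ξ ∈ Metric.sphere (0 : E) 1,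
      Finf ξ - ε ≤ t * F (t⁻¹ • ξ) :=
    (nhdsGT_basis (0 : ℝ)).eventually_iff.1 (h.eventually_forall_sphere hF hε)
  refine ⟨r⁻¹ * (|Finf 0| + L) + (L * r⁻¹ + |F 0|), fun z => ?_⟩
  have hC : 0 ≤ r⁻¹ * (|Finf 0| + L) + (L * r⁻¹ + |F 0|) := by positivity
  rcases lt_or_ge r⁻¹ ‖z‖ with hlarge | hsmall
  · have hz : 0 < ‖z‖ := (inv_pos.2 hr).trans hlarge
    have hξ : ‖z‖⁻¹ • z ∈ Metric.sphere (0 : E) 1 := by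
      simp [norm_smul, hz.ne']
    have key := hsphere ‖z‖⁻¹ ⟨inv_pos.2 hz, inv_lt_of_inv_lt₀ hr hlarge⟩ _ hξ
    rw [inv_inv, smul_inv_smul₀ hz.ne', ← div_eq_inv_mul, le_div_iff₀' hz] at key
    linarith
  · have hξ : ‖‖z‖⁻¹ • z‖ ≤ 1 := by
      rw [norm_smul, norm_inv, norm_norm]
      exact inv_mul_le_one
    have hFinf : Finf (‖z‖⁻¹ • z) - ε ≤ |Finf 0| + L := by
      have := (h.lipschitzWith hF).le_add_mul (‖z‖⁻¹ • z) 0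
      rw [dist_zero_right] at this
      nlinarith [le_abs_self (Finf 0), L.coe_nonneg]
    have hF₀ : -(L * r⁻¹ + |F 0|) ≤ F z := by
      have := hF.le_add_mul 0 z
      rw [dist_zero_left] at this
      nlinarith [neg_abs_le (F 0), L.coe_nonneg]
    have : ‖z‖ * (Finf (‖z‖⁻¹ • z) - ε) ≤ r⁻¹ * (|Finf 0| + L) :=
      (mul_le_mul_of_nonneg_left hFinf (norm_nonneg z)).trans (by gcongr)
    linarith

end IsRecessionFunction

end LinearGrowth

section Coercivity

variable {E : Type*} [NormedAddCommGroup E] [InnerProductSpace ℝ E] [FiniteDimensional ℝ E]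
  {F Finf : E → ℝ} {L : ℝ≥0}

theorem IsRecessionFunction.exists_half_mul_norm_sub_le (h : IsRecessionFunction F Finf)
    (hF : LipschitzWith L F) {δ : ℝ} (hδ : 0 < δ) :
    ∃ C, ∀ A : E, (∀ ξ, ‖ξ‖ = 1 → δ ≤ Finf ξ - ⟪A, ξ⟫) →
      ∀ z, δ / 2 * ‖z‖ - C ≤ F z - ⟪A, z⟫ := by
  obtain ⟨C, hC⟩ := h.exists_sub_le hF (half_pos hδ)
  refine ⟨C, fun A hA z => ?_⟩
  have hz := hC z
  rcases eq_or_ne z 0 with rfl | hz₀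
  · simp only [norm_zero, zero_mul, mul_zero, inner_zero_right] at hz ⊢
    linarith
  · have hξ := hA (‖z‖⁻¹ • z) (norm_smul_inv_norm (𝕜 := ℝ) hz₀)
    have hinner : ‖z‖ * ⟪A, ‖z‖⁻¹ • z⟫ = ⟪A, z⟫ := by
      rw [real_inner_smul_right, mul_inv_cancel_left₀ (norm_ne_zero_iff.2 hz₀)]
    have := mul_le_mul_of_nonneg_left hξ (norm_nonneg z)
    linarith

end Coercivity

section Separation

variable {X : Type*} [AddCommGroup X] [Module ℝ X]

theorem linearMap_eq_zero_of_bddBelow_submodule (f : X →ₗ[ℝ] ℝ) (V : Submodule ℝ X) {c : ℝ}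
    (hf : ∀ v ∈ V, c ≤ f v) : ∀ v ∈ V, f v = 0 := by
  intro v hv
  by_contra hne
  have h := hf (((c - 1) / f v) • v) (V.smul_mem _ hv)
  rw [map_smul, smul_eq_mul, div_mul_cancel₀ _ hne] at h
  linarith

theorem exists_continuousLinearMap_le_sub_of_convexOn [TopologicalSpace X]
    [IsTopologicalAddGroup X] [ContinuousSMul ℝ X] {Φ : X → ℝ} (hconv : ConvexOn ℝ univ Φ)
    (hcont : Continuous Φ) (V : Submodule ℝ X) {m : ℝ} (hm : ∀ v ∈ V, m ≤ Φ v) :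
    ∃ l : X →L[ℝ] ℝ, (∀ v ∈ V, l v = 0) ∧ ∀ x, m ≤ Φ x - l x := by
  have hopen : IsOpen {p : X × ℝ | Φ p.1 < p.2} :=
    isOpen_lt (hcont.comp continuous_fst) continuous_snd
  have hdisj : Disjoint {p : X × ℝ | Φ p.1 < p.2} ((V : Set X) ×ˢ {m}) := by
    rw [Set.disjoint_left]
    rintro ⟨x, r⟩ (hlt : Φ x < r) ⟨hx, rfl⟩
    exact (hm x hx).not_gt hlt
  obtain ⟨f, s, hlt, hle⟩ := geometric_hahn_banach_open
    (by simpa using hconv.convex_strict_epigraph) hopen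
    (V.convex.prod (convex_singleton m)) hdisj
  set g : X →L[ℝ] ℝ := f.comp (.inl ℝ X ℝ) with hg
  set c : ℝ := f (0, 1) with hc
  have hf : ∀ x r, f (x, r) = g x + r * c := fun x r => by
    rw [hg, hc, ContinuousLinearMap.comp_apply, ← smul_eq_mul, ← map_smul, ← map_add]
    simp
  have hgV : ∀ v ∈ V, g v = 0 :=
    linearMap_eq_zero_of_bddBelow_submodule g.toLinearMap V (c := s - m * c) fun v hv => by
      have := hle (v, m) ⟨hv, rfl⟩
      rw [hf] at this
      exact sub_le_iff_le_add.2 this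
  have hsep : ∀ x r, Φ x < r → g x + r * c < m * c := fun x r hr => by
    have h₁ := hlt (x, r) hr
    have h₂ := hle (0, m) ⟨V.zero_mem, rfl⟩
    rw [hf] at h₁ h₂
    rw [map_zero, zero_add] at h₂
    exact h₁.trans_le h₂
  have hc₀ : c < 0 := by
    have h := hsep 0 (Φ 0 + 1) (lt_add_one _)
    have := hm 0 V.zero_mem
    rw [map_zero, zero_add] at h
    nlinarith
  refine ⟨-(c⁻¹ • g), fun v hv => by simp [hgV v hv], fun x => ?_⟩
  refine le_of_forall_pos_le_add fun ε hε => ?_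
  have h := hsep x (Φ x + ε) (lt_add_of_pos_right _ hε)
  have hle : c⁻¹ * (m * c) ≤ c⁻¹ * (g x + (Φ x + ε) * c) :=
    mul_le_mul_of_nonpos_left h.le (inv_nonpos.2 hc₀.le)
  rw [mul_add, mul_comm m, mul_comm (Φ x + ε), inv_mul_cancel_left₀ hc₀.ne,
    inv_mul_cancel_left₀ hc₀.ne] at hle
  simp only [neg_apply, smul_apply, smul_eq_mul]
  linarith

end Separation

section Pairing

variable {α E : Type*} [MeasurableSpace α] {μ : Measure α}
  [NormedAddCommGroup E] [InnerProductSpace ℝ E]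

/-- The duality pairing `(σ, v) ↦ ∫ ⟪σ, v⟫ dμ` of `L^∞(μ; E)` with `L¹(μ; E)`. -/
noncomputable def linftyPairing (μ : Measure α) : Lp E ∞ μ →L[ℝ] Lp E 1 μ →L[ℝ] ℝ :=
  (innerSL ℝ).lpPairing μ ∞ 1

theorem linftyPairing_apply (σ : Lp E ∞ μ) (v : Lp E 1 μ) :
    linftyPairing μ σ v = ∫ x, ⟪σ x, v x⟫ ∂μ :=
  (innerSL ℝ).lpPairing_eq_integral σ v

theorem integrable_inner_linfty (σ : Lp E ∞ μ) {v : α → E} (hv : Integrable v μ) :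
    Integrable (fun x => ⟪σ x, v x⟫) μ :=
  memLp_one_iff_integrable.1 <|
    (innerSL ℝ).memLp_of_bilin 1 (Lp.memLp σ) (memLp_one_iff_integrable.2 hv)

theorem linftyPairing_toL1 (σ : Lp E ∞ μ) {v : α → E} (hv : Integrable v μ) :
    linftyPairing μ σ (hv.toL1 v) = ∫ x, ⟪σ x, v x⟫ ∂μ := by
  rw [linftyPairing_apply]
  exact integral_congr_ae (hv.coeFn_toL1.mono fun x hx => congrArg (inner ℝ (σ x)) hx)

/-- The annihilator in `L^∞(μ; E)` of a space of `L¹` fields. -/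
def linftyAnnihilator (V : Submodule ℝ (Lp E 1 μ)) : Set (Lp E ∞ μ) :=
  {χ | ∀ v ∈ V, linftyPairing μ χ v = 0}

end Pairing

section RieszRepresentation

theorem ae_norm_le_of_forall_setIntegral_sq_le {α E : Type*} [MeasurableSpace α] {μ : Measure α}
    [IsFiniteMeasure μ] [NormedAddCommGroup E] {g : α → E} (hg : MemLp g 2 μ) {C : ℝ}
    (hC : 0 ≤ C)
    (h : ∀ s, MeasurableSet s → ∫ x in s, ‖g x‖ ^ 2 ∂μ ≤ C * ∫ x in s, ‖g x‖ ∂μ) :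
    ∀ᵐ x ∂μ, ‖g x‖ ≤ C := by
  have hle : (fun x => ‖g x‖ ^ 2) ≤ᵐ[μ] fun x => C * ‖g x‖ :=
    ae_le_of_forall_setIntegral_le hg.norm.integrable_sq
      ((hg.integrable one_le_two).norm.const_mul C) fun s hs _ => by
        rw [integral_const_mul]
        exact h s hs
  filter_upwards [hle] with x hx
  by_contra! hlt
  nlinarith [norm_nonneg (g x)]

variable {α E : Type*} [MeasurableSpace α] {μ : Measure α} [IsFiniteMeasure μ]
  [NormedAddCommGroup E] [InnerProductSpace ℝ E]

theorem exists_Ltwo_toL1_continuousLinearMap :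
    ∃ ι : Lp E 2 μ →L[ℝ] Lp E 1 μ, ∀ v, ι v =ᵐ[μ] v := by
  have hone : MemLp (fun _ : α => (1 : ℝ)) 2 μ := memLp_const 1
  refine ⟨(ContinuousLinearMap.lsmul ℝ ℝ).holderL μ 2 2 1 hone.toLp, fun v => ?_⟩
  filter_upwards [(ContinuousLinearMap.lsmul ℝ ℝ).coeFn_holder (r := 1) hone.toLp v,
    hone.coeFn_toLp] with x hx h₁
  rw [ContinuousLinearMap.holderL_apply_apply, hx, h₁]
  exact one_smul ℝ (v x)

theorem ae_norm_le_opNorm_of_inner_eq {l : Lp E 1 μ →L[ℝ] ℝ} {g : α → E} (hg : MemLp g 2 μ)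
    (hl : ∀ v (hv : MemLp v 2 μ), l ((hv.integrable one_le_two).toL1 v) = ∫ x, ⟪g x, v x⟫ ∂μ) :
    ∀ᵐ x ∂μ, ‖g x‖ ≤ ‖l‖ := by
  refine ae_norm_le_of_forall_setIntegral_sq_le hg (norm_nonneg l) fun s hs => ?_
  have hv : MemLp (s.indicator g) 2 μ := hg.indicator hs
  calc ∫ x in s, ‖g x‖ ^ 2 ∂μ = ∫ x, ⟪g x, s.indicator g x⟫ ∂μ := by
        rw [← integral_indicator hs]
        refine integral_congr_ae (ae_of_all _ fun x => ?_)
        by_cases hx : x ∈ s <;> simp [hx]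
    _ = l ((hv.integrable one_le_two).toL1 _) := (hl _ hv).symm
    _ ≤ ‖l‖ * ‖(hv.integrable one_le_two).toL1 _‖ := (le_abs_self _).trans (l.le_opNorm _)
    _ = ‖l‖ * ∫ x in s, ‖g x‖ ∂μ := by
        rw [L1.norm_of_fun_eq_integral_norm, ← integral_indicator hs]
        simp only [norm_indicator_eq_indicator_norm]

theorem exists_linftyPairing_eq [CompleteSpace E] (l : Lp E 1 μ →L[ℝ] ℝ) :
    ∃ σ : Lp E ∞ μ, linftyPairing μ σ = l := by
  obtain ⟨ι, hι⟩ := exists_Ltwo_toL1_continuousLinearMap (μ := μ) (E := E)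
  set g : Lp E 2 μ := (InnerProductSpace.toDual ℝ (Lp E 2 μ)).symm (l.comp ι) with hg_def
  have hg : ∀ v (hv : MemLp v 2 μ),
      l ((hv.integrable one_le_two).toL1 v) = ∫ x, ⟪g x, v x⟫ ∂μ := fun v hv => by
    have hιv : ι hv.toLp = (hv.integrable one_le_two).toL1 v :=
      Lp.ext (((hι _).trans hv.coeFn_toLp).trans (hv.integrable one_le_two).coeFn_toL1.symm)
    rw [← hιv, ← ContinuousLinearMap.comp_apply, ← InnerProductSpace.toDual_symm_apply, ← hg_def,
      L2.inner_def]
    exact integral_congr_ae (hv.coeFn_toLp.mono fun x hx => congrArg (inner ℝ (g x)) hx)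
  have hσ : MemLp g ∞ μ := memLp_top_of_bound (Lp.aestronglyMeasurable g) _
    (ae_norm_le_opNorm_of_inner_eq (Lp.memLp g) hg)
  refine ⟨hσ.toLp, ContinuousLinearMap.ext fun v => ?_⟩
  refine Lp.induction ENNReal.one_ne_top (fun v => linftyPairing μ hσ.toLp v = l v) ?_ ?_ ?_ v
  · intro c s hs hμs
    have hv : MemLp (s.indicator fun _ => c) 2 μ := (memLp_const c).indicator hs
    change linftyPairing μ hσ.toLp ((hv.integrable one_le_two).toL1 _)
      = l ((hv.integrable one_le_two).toL1 _)
    rw [hg _ hv, linftyPairing_toL1]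
    exact integral_congr_ae (hσ.coeFn_toLp.mono fun x hx => congrArg (inner ℝ · _) hx)
  · intro f g hf hg _ h₁ h₂
    rw [map_add, map_add, h₁, h₂]
  · exact isClosed_eq (linftyPairing μ hσ.toLp).continuous l.continuous

end RieszRepresentation

section Conjugate

variable {E : Type*} [NormedAddCommGroup E] [InnerProductSpace ℝ E] {F : E → ℝ}

/-- The shifted convex conjugate `F*(ζ) + F(0)`; the shift makes it nonnegative, so that it can
take the value `∞` in `ℝ≥0∞`. -/
noncomputable def conjShift (F : E → ℝ) (ζ : E) : ℝ≥0∞ :=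
  ⨆ w, ENNReal.ofReal (⟪ζ, w⟫ - F w + F 0)

theorem ofReal_le_conjShift (F : E → ℝ) (ζ w : E) :
    ENNReal.ofReal (⟪ζ, w⟫ - F w + F 0) ≤ conjShift F ζ :=
  le_iSup (fun w => ENNReal.ofReal (⟪ζ, w⟫ - F w + F 0)) w

theorem measurable_conjShift [MeasurableSpace E] [BorelSpace E] (F : E → ℝ) :
    Measurable (conjShift F) := by
  refine (lowerSemicontinuous_iSup fun w => Continuous.lowerSemicontinuous ?_).measurable
  exact ENNReal.continuous_ofReal.comp (by fun_prop)

theorem conjShift_eq_iSup_of_denseRange (hF : Continuous F) {ι : Type*} {w : ι → E}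
    (hw : DenseRange w) (ζ : E) :
    conjShift F ζ = ⨆ j, ENNReal.ofReal (⟪ζ, w j⟫ - F (w j) + F 0) := by
  refine le_antisymm (iSup_le fun z => ?_) (iSup_le fun j => ofReal_le_conjShift F ζ (w j))
  have hclosed : IsClosed {z | ENNReal.ofReal (⟪ζ, z⟫ - F z + F 0) ≤
      ⨆ j, ENNReal.ofReal (⟪ζ, w j⟫ - F (w j) + F 0)} :=
    isClosed_le (ENNReal.continuous_ofReal.comp (by fun_prop)) continuous_const
  exact hw.induction_on z hclosed fun j =>
    le_iSup (fun j => ENNReal.ofReal (⟪ζ, w j⟫ - F (w j) + F 0)) j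

end Conjugate

section Energy

variable {α E : Type*} [MeasurableSpace α] {μ : Measure α}
  [NormedAddCommGroup E] {F : E → ℝ} {L : ℝ≥0}

theorem integrable_comp_of_lipschitzWith [IsFiniteMeasure μ] (hF : LipschitzWith L F) {v : α → E}
    (hv : Integrable v μ) : Integrable (fun x => F (v x)) μ := by
  refine ((hv.norm.const_mul L).add (integrable_const |F 0|)).mono'
    (hF.continuous.comp_aestronglyMeasurable hv.1) (ae_of_all _ fun x => ?_)
  have h := hF.dist_le_mul (v x) 0
  rw [dist_zero_right, Real.dist_eq] at h
  have := abs_sub_abs_le_abs_sub (F (v x)) (F 0)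
  simp only [Pi.add_apply, Real.norm_eq_abs]
  linarith

theorem lipschitzWith_integral_comp [IsFiniteMeasure μ] (hF : LipschitzWith L F) :
    LipschitzWith L fun v : Lp E 1 μ => ∫ x, F (v x) ∂μ := by
  refine LipschitzWith.of_le_add_mul L fun v w => ?_
  have hv := integrable_comp_of_lipschitzWith hF (L1.integrable_coeFn v)
  have hw := integrable_comp_of_lipschitzWith hF (L1.integrable_coeFn w)
  have hd := (L1.integrable_coeFn (v - w)).norm.const_mul (L : ℝ)
  calc ∫ x, F (v x) ∂μ ≤ ∫ x, (F (w x) + L * ‖(v - w : Lp E 1 μ) x‖) ∂μ := by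
        refine integral_mono_ae hv (hw.add hd) ((Lp.coeFn_sub v w).mono fun x hx => ?_)
        simpa only [hx, Pi.sub_apply, dist_eq_norm] using hF.le_add_mul (v x) (w x)
    _ = ∫ x, F (w x) ∂μ + L * dist v w := by
        rw [integral_add hw hd, integral_const_mul, dist_eq_norm, L1.norm_eq_integral_norm]

variable [InnerProductSpace ℝ E]

/-- The energy `∫ (F(v) - ⟪T, v⟫) dμ` of a field `v` under the load `T`. -/
noncomputable def energy (F : E → ℝ) (T : Lp E ∞ μ) (v : α → E) : ℝ :=
  ∫ x, (F (v x) - ⟪T x, v x⟫) ∂μ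

theorem integrable_energy_density [IsFiniteMeasure μ] (hF : LipschitzWith L F) (T : Lp E ∞ μ)
    {v : α → E} (hv : Integrable v μ) : Integrable (fun x => F (v x) - ⟪T x, v x⟫) μ :=
  (integrable_comp_of_lipschitzWith hF hv).sub (integrable_inner_linfty T hv)

theorem energy_congr_ae (F : E → ℝ) (T : Lp E ∞ μ) {v w : α → E} (h : v =ᵐ[μ] w) :
    energy F T v = energy F T w :=
  integral_congr_ae (h.mono fun x hx => by simp only [hx])

theorem energy_zero (F : E → ℝ) (T : Lp E ∞ μ) :
    energy F T (0 : Lp E 1 μ) = F 0 * μ.real univ := by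
  rw [energy_congr_ae F T (Lp.coeFn_zero E 1 μ)]
  simp [energy, mul_comm]

theorem energy_eq_sub [IsFiniteMeasure μ] (hF : LipschitzWith L F) (T : Lp E ∞ μ)
    (v : Lp E 1 μ) : energy F T v = ∫ x, F (v x) ∂μ - linftyPairing μ T v := by
  have hv := L1.integrable_coeFn v
  rw [linftyPairing_apply]
  exact integral_sub (integrable_comp_of_lipschitzWith hF hv) (integrable_inner_linfty T hv)

theorem energy_add_left [IsFiniteMeasure μ] (hF : LipschitzWith L F) (T χ : Lp E ∞ μ)
    (v : Lp E 1 μ) : energy F (T + χ) v = energy F T v - linftyPairing μ χ v := by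
  rw [energy_eq_sub hF, energy_eq_sub hF, map_add, add_apply, sub_sub]

theorem energy_add_left_of_mem [IsFiniteMeasure μ] (hF : LipschitzWith L F) (T : Lp E ∞ μ)
    {χ : Lp E ∞ μ} {V : Submodule ℝ (Lp E 1 μ)} (hχ : χ ∈ linftyAnnihilator V) {v : Lp E 1 μ}
    (hv : v ∈ V) : energy F (T + χ) v = energy F T v := by
  rw [energy_add_left hF, hχ v hv, sub_zero]

theorem continuous_energy [IsFiniteMeasure μ] (hF : LipschitzWith L F) (T : Lp E ∞ μ) :
    Continuous fun v : Lp E 1 μ => energy F T v := by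
  simp only [energy_eq_sub hF]
  exact (lipschitzWith_integral_comp hF).continuous.sub (linftyPairing μ T).continuous

theorem convexOn_energy [IsFiniteMeasure μ] (hF : LipschitzWith L F) (hconv : ConvexOn ℝ univ F)
    (T : Lp E ∞ μ) : ConvexOn ℝ univ fun v : Lp E 1 μ => energy F T v := by
  simp only [energy_eq_sub hF]
  refine ConvexOn.sub ⟨convex_univ, fun v _ w _ a b ha hb hab => ?_⟩
    ((linftyPairing μ T).toLinearMap.concaveOn convex_univ)
  have hv := integrable_comp_of_lipschitzWith hF (L1.integrable_coeFn v)
  have hw := integrable_comp_of_lipschitzWith hF (L1.integrable_coeFn w)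
  have hvw : (a • v + b • w : Lp E 1 μ) =ᵐ[μ] fun x => a • v x + b • w x := by
    filter_upwards [Lp.coeFn_add (a • v) (b • w), Lp.coeFn_smul a v, Lp.coeFn_smul b w]
      with x h h₁ h₂
    rw [h, Pi.add_apply, h₁, h₂, Pi.smul_apply, Pi.smul_apply]
  simp only [smul_eq_mul]
  rw [← integral_const_mul, ← integral_const_mul,
    ← integral_add (hv.const_mul a) (hw.const_mul b)]
  refine integral_mono_ae (integrable_comp_of_lipschitzWith hF (L1.integrable_coeFn _))
    ((hv.const_mul a).add (hw.const_mul b)) (hvw.mono fun x hx => ?_)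
  simpa only [hx, smul_eq_mul] using hconv.2 (mem_univ (v x)) (mem_univ (w x)) ha hb hab

end Energy

section Duality

variable {α E : Type*} [MeasurableSpace α] {μ : Measure α} [IsFiniteMeasure μ]
  [NormedAddCommGroup E] [InnerProductSpace ℝ E] {F : E → ℝ} {L : ℝ≥0}

/-- The integral `∫ (F*(ζ) + F(0)) dμ`, i.e. the negative of the dual functional at `ζ` up to the
constant `F(0) μ(univ)`. -/
noncomputable def conjEnergy (F : E → ℝ) (ζ : Lp E ∞ μ) : ℝ≥0∞ :=
  ∫⁻ x, conjShift F (ζ x) ∂μ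

theorem ofReal_integral_le_lintegral_ofReal {μ : Measure α} {f : α → ℝ} (hf : Integrable f μ) :
    ENNReal.ofReal (∫ x, f x ∂μ) ≤ ∫⁻ x, ENNReal.ofReal (f x) ∂μ := by
  rw [integral_eq_lintegral_pos_part_sub_lintegral_neg_part hf]
  exact (ENNReal.ofReal_le_ofReal (sub_le_self _ ENNReal.toReal_nonneg)).trans
    ENNReal.ofReal_toReal_le

theorem integrable_conj_density (hF : LipschitzWith L F) (ζ : Lp E ∞ μ) {v : α → E}
    (hv : Integrable v μ) : Integrable (fun x => ⟪ζ x, v x⟫ - F (v x) + F 0) μ :=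
  ((integrable_inner_linfty ζ hv).sub (integrable_comp_of_lipschitzWith hF hv)).add
    (integrable_const _)

theorem integral_conj_density (hF : LipschitzWith L F) (ζ : Lp E ∞ μ) {v : α → E}
    (hv : Integrable v μ) :
    ∫ x, (⟪ζ x, v x⟫ - F (v x) + F 0) ∂μ = F 0 * μ.real univ - energy F ζ v := by
  calc ∫ x, (⟪ζ x, v x⟫ - F (v x) + F 0) ∂μ
      = ∫ x, (F 0 - (F (v x) - ⟪ζ x, v x⟫)) ∂μ := by congr with x; ring
    _ = F 0 * μ.real univ - energy F ζ v := by
      rw [integral_sub (integrable_const _) (integrable_energy_density hF ζ hv), integral_const,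
        smul_eq_mul, mul_comm, energy]

theorem ofReal_sub_energy_le_conjEnergy (hF : LipschitzWith L F) (ζ : Lp E ∞ μ) {v : α → E}
    (hv : Integrable v μ) :
    ENNReal.ofReal (F 0 * μ.real univ - energy F ζ v) ≤ conjEnergy F ζ := by
  rw [← integral_conj_density hF ζ hv]
  exact (ofReal_integral_le_lintegral_ofReal (integrable_conj_density hF ζ hv)).trans
    (lintegral_mono fun x => ofReal_le_conjShift F (ζ x) (v x))

theorem ofReal_sub_energy_le_conjEnergy_of_mem (hF : LipschitzWith L F) (T : Lp E ∞ μ)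
    {V : Submodule ℝ (Lp E 1 μ)} {χ : Lp E ∞ μ} (hχ : χ ∈ linftyAnnihilator V) {v : Lp E 1 μ}
    (hv : v ∈ V) :
    ENNReal.ofReal (F 0 * μ.real univ - energy F T v) ≤ conjEnergy F (T + χ) := by
  rw [← energy_add_left_of_mem hF T hχ hv]
  exact ofReal_sub_energy_le_conjEnergy hF (T + χ) (L1.integrable_coeFn v)

theorem exists_measurable_argmax {α : Type*} [MeasurableSpace α] {f : ℕ → α → ℝ}
    (hf : ∀ j, Measurable (f j)) (k : ℕ) :
    ∃ i : α → ℕ, Measurable i ∧ ∀ x, i x ≤ k ∧ ∀ j ≤ k, f j x ≤ f (i x) x := by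
  induction k with
  | zero => exact ⟨0, measurable_const, fun x => ⟨le_rfl, fun j hj => Nat.le_zero.1 hj ▸ le_rfl⟩⟩
  | succ k ih =>
    obtain ⟨i, hi, hmax⟩ := ih
    have hfi : Measurable fun x => f (i x) x :=
      (measurable_from_prod_countable_right (f := fun p : ℕ × α => f p.1 p.2) hf).comp
        (hi.prodMk measurable_id)
    refine ⟨fun x => if f (i x) x ≤ f (k + 1) x then k + 1 else i x,
      Measurable.ite (measurableSet_le hfi (hf _)) measurable_const hi, fun x => ?_⟩
    have hmax' : ∀ j ≤ k + 1, f j x ≤ f (i x) x ∨ j = k + 1 := fun j hj =>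
      (Nat.le_succ_iff.1 hj).imp_left ((hmax x).2 j)
    dsimp only
    split_ifs with hx
    · exact ⟨le_rfl, fun j hj => (hmax' j hj).elim hx.trans' fun h => h ▸ le_rfl⟩
    · exact ⟨(hmax x).1.trans k.le_succ,
        fun j hj => (hmax' j hj).elim id fun h => h ▸ (not_le.1 hx).le⟩

theorem integrable_comp_of_forall_le {E : Type*} [NormedAddCommGroup E] (w : ℕ → E)
    {i : α → ℕ} (hi : Measurable i) {k : ℕ} (hk : ∀ x, i x ≤ k) :
    Integrable (fun x => w (i x)) μ := by
  refine .of_bound (StronglyMeasurable.of_discrete.comp_measurable hi).aestronglyMeasurable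
    (∑ j ∈ Finset.range (k + 1), ‖w j‖) (ae_of_all _ fun x => ?_)
  exact Finset.single_le_sum (f := fun j => ‖w j‖) (fun j _ => norm_nonneg _)
    (Finset.mem_range_succ_iff.2 (hk x))

theorem exists_denseRange_zero_eq_zero (E : Type*) [TopologicalSpace E] [Zero E]
    [TopologicalSpace.SeparableSpace E] : ∃ w : ℕ → E, DenseRange w ∧ w 0 = 0 :=
  ⟨fun n => n.casesOn 0 (TopologicalSpace.denseSeq E),
    (TopologicalSpace.denseRange_denseSeq E).mono (range_subset_iff.2 fun n => ⟨n + 1, rfl⟩), rfl⟩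

variable [TopologicalSpace.SeparableSpace E]

theorem conjEnergy_le_of_forall_le_energy (hF : LipschitzWith L F) (ζ : Lp E ∞ μ) {m : ℝ}
    (hm : ∀ v, Integrable v μ → m ≤ energy F ζ v) :
    conjEnergy F ζ ≤ ENNReal.ofReal (F 0 * μ.real univ - m) := by
  -- Starting the dense sequence at `0` keeps the running maxima nonnegative.
  obtain ⟨w, hw, hw₀⟩ := exists_denseRange_zero_eq_zero E
  set f : ℕ → α → ℝ := fun j x => ⟪ζ x, w j⟫ - F (w j) + F 0 with hf_def
  have hf : ∀ j, Measurable (f j) := fun j =>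
    ((((Lp.stronglyMeasurable ζ).inner (𝕜 := ℝ)
      stronglyMeasurable_const).measurable.sub_const _).add_const _)
  choose i hi hmax using exists_measurable_argmax hf
  have hv : ∀ k, Integrable (fun x => w (i k x)) μ := fun k =>
    integrable_comp_of_forall_le w (hi k) fun x => (hmax k x).1
  have hconj : ∀ x, conjShift F (ζ x) = ⨆ k, ENNReal.ofReal (f (i k x) x) := fun x => by
    rw [conjShift_eq_iSup_of_denseRange hF.continuous hw]
    exact le_antisymm
      (iSup_mono fun k => ENNReal.ofReal_le_ofReal ((hmax k x).2 k le_rfl))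
      (iSup_le fun k => le_iSup (fun j => ENNReal.ofReal (f j x)) (i k x))
  have hmono : ∀ x, Monotone fun k => ENNReal.ofReal (f (i k x) x) := fun x k l hkl =>
    ENNReal.ofReal_le_ofReal ((hmax l x).2 _ ((hmax k x).1.trans hkl))
  have hnonneg : ∀ k x, 0 ≤ f (i k x) x := fun k x => by
    simpa [hf_def, hw₀] using (hmax k x).2 0 k.zero_le
  have hint : ∀ k, ∫⁻ x, ENNReal.ofReal (f (i k x) x) ∂μ ≤
      ENNReal.ofReal (F 0 * μ.real univ - m) := fun k => by
    rw [← ofReal_integral_eq_lintegral_ofReal (integrable_conj_density hF ζ (hv k))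
      (ae_of_all _ (hnonneg k)), integral_conj_density hF ζ (hv k)]
    exact ENNReal.ofReal_le_ofReal (sub_le_sub_left (hm _ (hv k)) _)
  simp only [conjEnergy, hconj]
  rw [lintegral_iSup' (fun k => (integrable_conj_density hF ζ (hv k)).1.aemeasurable.ennreal_ofReal)
    (ae_of_all _ hmono)]
  exact iSup_le hint

theorem exists_mem_linftyAnnihilator_conjEnergy_le [CompleteSpace E] (hF : LipschitzWith L F)
    (hconv : ConvexOn ℝ univ F) (T : Lp E ∞ μ) (V : Submodule ℝ (Lp E 1 μ)) {m : ℝ}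
    (hm : ∀ v ∈ V, m ≤ energy F T v) :
    ∃ σ ∈ linftyAnnihilator V,
      conjEnergy F (T + σ) ≤ ENNReal.ofReal (F 0 * μ.real univ - m) := by
  obtain ⟨l, hlV, hl⟩ := exists_continuousLinearMap_le_sub_of_convexOn
    (convexOn_energy hF hconv T) (continuous_energy hF T) V hm
  obtain ⟨σ, rfl⟩ := exists_linftyPairing_eq l
  refine ⟨σ, hlV, conjEnergy_le_of_forall_le_energy hF _ fun v hv => ?_⟩
  rw [← energy_congr_ae F (T + σ) hv.coeFn_toL1, energy_add_left hF]
  exact hl (hv.toL1 v)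

end Duality

section FenchelGap

variable {E : Type*} [NormedAddCommGroup E] [InnerProductSpace ℝ E] {F : E → ℝ} {ζ : E}

theorem norm_gradient_le_of_lipschitzWith [CompleteSpace E] {L : ℝ≥0} (hF : LipschitzWith L F)
    (z : E) : ‖∇ F z‖ ≤ L := by
  rw [← (InnerProductSpace.toDual ℝ E).norm_map, toDual_gradient]
  exact norm_fderiv_le_of_lipschitz ℝ hF

theorem continuous_gradient [CompleteSpace E] (hF : ContDiff ℝ 1 F) : Continuous (∇ F) :=
  (InnerProductSpace.toDual ℝ E).symm.continuous.comp (hF.continuous_fderiv one_ne_zero)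

/-- The defect `F*(ζ) + F(z) - ⟪ζ, z⟫` in the Fenchel-Young inequality. It is meaningful only
where `conjShift F ζ` is finite. -/
noncomputable def fenchelGap (F : E → ℝ) (ζ z : E) : ℝ :=
  (conjShift F ζ).toReal - (⟪ζ, z⟫ - F z + F 0)

theorem fenchelGap_nonneg (hζ : conjShift F ζ ≠ ∞) (z : E) : 0 ≤ fenchelGap F ζ z :=
  sub_nonneg.2 ((ENNReal.ofReal_le_iff_le_toReal hζ).1 (ofReal_le_conjShift F ζ z))

theorem continuous_fenchelGap (hF : Continuous F) (ζ : E) : Continuous (fenchelGap F ζ) := by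
  unfold fenchelGap
  fun_prop

theorem gradient_eq_of_fenchelGap_eq_zero [CompleteSpace E] (hζ : conjShift F ζ ≠ ∞) {z : E}
    (hF : DifferentiableAt ℝ F z) (hz : fenchelGap F ζ z = 0) : ∇ F z = ζ := by
  have hmin : IsLocalMin (fun w => F w - ⟪ζ, w⟫) z := .of_forall fun w => by
    have := fenchelGap_nonneg hζ w
    unfold fenchelGap at this hz
    linarith
  have hderiv := hmin.hasFDerivAt_eq_zero
    (hF.hasFDerivAt.sub (InnerProductSpace.toDual ℝ E ζ).hasFDerivAt)
  rwa [sub_eq_zero, ← toDual_gradient, (InnerProductSpace.toDual ℝ E).injective.eq_iff] at hderiv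

theorem tendsto_gradient_of_tendsto_fenchelGap [ProperSpace E] (hF : ContDiff ℝ 1 F)
    (hζ : conjShift F ζ ≠ ∞) {ι : Type*} {l : Filter ι} {z : ι → E} {R : ℝ}
    (hz : ∀ᶠ i in l, ‖z i‖ ≤ R) (hgap : Tendsto (fun i => fenchelGap F ζ (z i)) l (𝓝 0)) :
    Tendsto (fun i => ∇ F (z i)) l (𝓝 ζ) := by
  refine tendsto_iff_ultrafilter _ _ _ |>.2 fun g hg => ?_
  obtain ⟨z₀, -, hz₀ : Tendsto z g (𝓝 z₀)⟩ :=
    (isCompact_closedBall (0 : E) R).ultrafilter_le_nhds (g.map z)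
      (le_principal_iff.2 ((hz.filter_mono hg).mono fun i hi => mem_closedBall_zero_iff.2 hi))
  have hgap₀ : fenchelGap F ζ z₀ = 0 := tendsto_nhds_unique
    (((continuous_fenchelGap hF.continuous ζ).tendsto z₀).comp hz₀) (hgap.mono_left hg)
  rw [← gradient_eq_of_fenchelGap_eq_zero hζ (hF.differentiable one_ne_zero z₀) hgap₀]
  exact ((continuous_gradient hF).tendsto z₀).comp hz₀

end FenchelGap

section Truncation

variable {α E G : Type*} [MeasurableSpace α] {μ : Measure α} [IsFiniteMeasure μ]
  [NormedAddCommGroup E] [NormedAddCommGroup G]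

theorem measureReal_lt_norm_le_div (y : Lp E 1 μ) {R : ℝ} (hR : 0 < R) :
    μ.real {x | R < ‖y x‖} ≤ ‖y‖ / R := by
  rw [le_div_iff₀' hR, L1.norm_eq_integral_norm]
  exact (mul_le_mul_of_nonneg_left (measureReal_mono fun x (hx : R < ‖y x‖) => hx.le) hR.le).trans
    (mul_meas_ge_le_integral_of_nonneg (ae_of_all _ fun x => norm_nonneg _)
      (L1.integrable_coeFn y).norm R)

theorem tendstoInMeasure_of_forall_tendsto_inf_principal_norm_le {y : ℕ → Lp E 1 μ} {C : ℝ}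
    (hy : ∀ k, ‖y k‖ ≤ C) {f : ℕ → α → G} {g : α → G} (hf : ∀ k, AEStronglyMeasurable (f k) μ)
    (hg : AEStronglyMeasurable g μ)
    (h : ∀ R : ℝ, ∀ᵐ x ∂μ, Tendsto (fun k => f k x) (atTop ⊓ 𝓟 {k | ‖y k x‖ ≤ R}) (𝓝 (g x))) :
    TendstoInMeasure μ f atTop g := by
  classical
  refine tendstoInMeasure_iff_measureReal_norm.2 fun ε hε => tendsto_order.2
    ⟨fun a ha => .of_forall fun k => ha.trans_le measureReal_nonneg, fun η hη => ?_⟩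
  have hC : 0 ≤ C := (norm_nonneg (y 0)).trans (hy 0)
  set R := 2 * (C + 1) / η with hR_def
  have hR : 0 < R := by positivity
  have hCR : C / R < η / 2 := by
    rw [hR_def, div_div_eq_mul_div, div_lt_iff₀ (by positivity)]
    nlinarith
  set d : ℕ → α → G := fun k => {x | ‖y k x‖ ≤ R}.indicator fun x => f k x - g x with hd_def
  have hd_meas : ∀ k, AEStronglyMeasurable (d k) μ := fun k => ((hf k).sub hg).indicator <|
    measurableSet_le (Lp.stronglyMeasurable (y k)).norm.measurable measurable_const
  have hd_ae : ∀ᵐ x ∂μ, Tendsto (fun k => d k x) atTop (𝓝 0) := (h R).mono fun x hx => by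
    simp only [hd_def, indicator_apply, mem_ofPred_eq]
    exact (tendsto_sub_nhds_zero_iff.2 hx).if tendsto_const_nhds
  have hd := tendstoInMeasure_iff_measureReal_norm.1
    (tendstoInMeasure_of_tendsto_ae hd_meas hd_ae) ε hε
  filter_upwards [hd.eventually_lt_const (half_pos hη)] with k hk
  have hsub : {x | ε ≤ ‖f k x - g x‖} ⊆ {x | ε ≤ ‖d k x - 0‖} ∪ {x | R < ‖y k x‖} := by
    intro x hx
    rcases le_or_gt ‖y k x‖ R with hxR | hxR
    · left
      simpa only [hd_def, mem_ofPred_eq, indicator_of_mem (s := {x | ‖y k x‖ ≤ R}) hxR, sub_zero]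
        using hx
    · exact Or.inr hxR
  calc μ.real {x | ε ≤ ‖f k x - g x‖}
      ≤ μ.real {x | ε ≤ ‖d k x - 0‖} + μ.real {x | R < ‖y k x‖} :=
        (measureReal_mono hsub).trans (measureReal_union_le _ _)
    _ < η / 2 + η / 2 := add_lt_add hk <|
        ((measureReal_lt_norm_le_div (y k) hR).trans (by gcongr; exact hy k)).trans_lt hCR
    _ = η := add_halves η

end Truncation

section StressConvergence

variable {α E : Type*} [MeasurableSpace α] {μ : Measure α}
  [NormedAddCommGroup E] [InnerProductSpace ℝ E]

theorem tendstoInMeasure_zero_of_tendsto_integral {f : ℕ → α → ℝ} (hf : ∀ k, Integrable (f k) μ)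
    (hf₀ : ∀ k, 0 ≤ᵐ[μ] f k) (h : Tendsto (fun k => ∫ x, f k x ∂μ) atTop (𝓝 0)) :
    TendstoInMeasure μ f atTop 0 := by
  refine tendstoInMeasure_of_tendsto_eLpNorm one_ne_zero (fun k => (hf k).1)
    aestronglyMeasurable_const ?_
  have heq : ∀ k, eLpNorm (f k - 0) 1 μ = ENNReal.ofReal (∫ x, f k x ∂μ) := fun k => by
    rw [sub_zero, eLpNorm_one_eq_lintegral_enorm, ← ofReal_integral_norm_eq_lintegral_enorm (hf k)]
    congr 1
    exact integral_congr_ae ((hf₀ k).mono fun x hx => Real.norm_of_nonneg hx)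
  simpa only [heq, ENNReal.ofReal_zero] using ENNReal.tendsto_ofReal h

theorem tendsto_integral_inner_of_tendstoInMeasure {f : ℕ → α → E} {g φ : α → E} {C : ℝ}
    (hf : ∀ k, AEStronglyMeasurable (f k) μ) (hC : ∀ k, ∀ᵐ x ∂μ, ‖f k x‖ ≤ C)
    (h : TendstoInMeasure μ f atTop g) (hφ : Integrable φ μ) :
    Tendsto (fun k => ∫ x, ⟪f k x, φ x⟫ ∂μ) atTop (𝓝 (∫ x, ⟪g x, φ x⟫ ∂μ)) := by
  refine tendsto_of_subseq_tendsto fun ns hns => ?_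
  obtain ⟨ms, -, hms⟩ := (h.comp hns).exists_seq_tendsto_ae
  refine ⟨ms, tendsto_integral_of_dominated_convergence (fun x => C * ‖φ x‖)
    (fun k => (hf _).inner hφ.1) (hφ.norm.const_mul C)
    (fun k => (hC (ns (ms k))).mono fun x hx => ?_)
    (hms.mono fun x hx => hx.inner tendsto_const_nhds)⟩
  exact (norm_inner_le_norm _ _).trans (by gcongr)

variable {F : E → ℝ} {L : ℝ≥0} {ζ : Lp E ∞ μ}

theorem ae_conjShift_ne_top (hζ : conjEnergy F ζ ≠ ∞) : ∀ᵐ x ∂μ, conjShift F (ζ x) ≠ ∞ := by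
  borelize E
  exact (ae_lt_top ((measurable_conjShift F).comp (Lp.stronglyMeasurable ζ).measurable) hζ).mono
    fun x hx => hx.ne

theorem integrable_toReal_conjShift (hζ : conjEnergy F ζ ≠ ∞) :
    Integrable (fun x => (conjShift F (ζ x)).toReal) μ := by
  borelize E
  exact integrable_toReal_of_lintegral_ne_top
    ((measurable_conjShift F).comp (Lp.stronglyMeasurable ζ).measurable).aemeasurable hζ

theorem integral_toReal_conjShift (hζ : conjEnergy F ζ ≠ ∞) :
    ∫ x, (conjShift F (ζ x)).toReal ∂μ = (conjEnergy F ζ).toReal := by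
  borelize E
  exact integral_toReal
    ((measurable_conjShift F).comp (Lp.stronglyMeasurable ζ).measurable).aemeasurable
    ((ae_conjShift_ne_top hζ).mono fun x hx => hx.lt_top)

variable [IsFiniteMeasure μ]

theorem integrable_fenchelGap (hF : LipschitzWith L F) (hζ : conjEnergy F ζ ≠ ∞) {v : α → E}
    (hv : Integrable v μ) : Integrable (fun x => fenchelGap F (ζ x) (v x)) μ :=
  (integrable_toReal_conjShift hζ).sub (integrable_conj_density hF ζ hv)

theorem integral_fenchelGap (hF : LipschitzWith L F) (hζ : conjEnergy F ζ ≠ ∞) {v : α → E}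
    (hv : Integrable v μ) :
    ∫ x, fenchelGap F (ζ x) (v x) ∂μ =
      (conjEnergy F ζ).toReal - (F 0 * μ.real univ - energy F ζ v) := by
  simp only [fenchelGap]
  rw [integral_sub (integrable_toReal_conjShift hζ) (integrable_conj_density hF ζ hv),
    integral_toReal_conjShift hζ, integral_conj_density hF ζ hv]

theorem tendstoInMeasure_fenchelGap (hF : LipschitzWith L F) (hζ : conjEnergy F ζ ≠ ∞)
    {v : ℕ → Lp E 1 μ} (hE : Tendsto (fun k => energy F ζ (v k)) atTop
      (𝓝 (F 0 * μ.real univ - (conjEnergy F ζ).toReal))) :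
    TendstoInMeasure μ (fun k x => fenchelGap F (ζ x) (v k x)) atTop 0 := by
  have hv := fun k => L1.integrable_coeFn (v k)
  refine tendstoInMeasure_zero_of_tendsto_integral
    (fun k => integrable_fenchelGap hF hζ (hv k))
    (fun k => (ae_conjShift_ne_top hζ).mono fun x hx => fenchelGap_nonneg hx _) ?_
  simp only [integral_fenchelGap hF hζ (hv _)]
  convert (hE.const_sub (F 0 * μ.real univ)).const_sub (conjEnergy F ζ).toReal using 2
  ring

theorem tendstoInMeasure_gradient [ProperSpace E] (hF : LipschitzWith L F) (hC1 : ContDiff ℝ 1 F)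
    (hζ : conjEnergy F ζ ≠ ∞) {v : ℕ → Lp E 1 μ} {C : ℝ} (hv : ∀ k, ‖v k‖ ≤ C)
    (hE : Tendsto (fun k => energy F ζ (v k)) atTop
      (𝓝 (F 0 * μ.real univ - (conjEnergy F ζ).toReal))) :
    TendstoInMeasure μ (fun k x => ∇ F (v k x)) atTop ζ := by
  have hmeas : ∀ k, AEStronglyMeasurable (fun x => ∇ F (v k x)) μ := fun k =>
    (continuous_gradient hC1).comp_aestronglyMeasurable (Lp.aestronglyMeasurable (v k))
  refine (exists_seq_tendstoInMeasure_atTop_iff hmeas).2 fun ns hns => ?_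
  obtain ⟨ms, hms, hgap⟩ :=
    ((tendstoInMeasure_fenchelGap hF hζ hE).comp hns.tendsto_atTop).exists_seq_tendsto_ae
  have hgrad : TendstoInMeasure μ (fun k x => ∇ F (v (ns (ms k)) x)) atTop ζ := by
    refine tendstoInMeasure_of_forall_tendsto_inf_principal_norm_le
      (y := fun k => v (ns (ms k))) (fun k => hv _) (fun k => hmeas _)
      (Lp.aestronglyMeasurable ζ) fun R => ?_
    filter_upwards [hgap, ae_conjShift_ne_top hζ] with x hx hζx
    exact tendsto_gradient_of_tendsto_fenchelGap hC1 hζx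
      (eventually_inf_principal.2 (.of_forall fun k hk => hk)) (hx.mono_left inf_le_left)
  obtain ⟨ls, hls, hlim⟩ := hgrad.exists_seq_tendsto_ae
  exact ⟨ms ∘ ls, hms.comp hls, hlim⟩

end StressConvergence

section MinimisingSequence

variable {α E : Type*} [MeasurableSpace α] {μ : Measure α}
  [NormedAddCommGroup E] [InnerProductSpace ℝ E] {F Finf : E → ℝ} {L : ℝ≥0}
  {T χ : Lp E ∞ μ} {V : Submodule ℝ (Lp E 1 μ)} {v : ℕ → Lp E 1 μ} {m : ℝ}

theorem exists_norm_le_of_tendsto_energy {a C : ℝ} (ha : 0 < a)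
    (hcoer : ∀ v : Lp E 1 μ, a * ‖v‖ - C ≤ energy F T v)
    (hE : Tendsto (fun k => energy F T (v k)) atTop (𝓝 m)) : ∃ B, ∀ k, ‖v k‖ ≤ B := by
  obtain ⟨B, hB⟩ := hE.bddAbove_range
  refine ⟨(B + C) / a, fun k => (le_div_iff₀' ha).2 ?_⟩
  linarith [hcoer (v k), hB (mem_range_self k)]

theorem tendsto_integral_inner_gradient_sub [CompleteSpace E] (hF : LipschitzWith L F)
    (hC1 : ContDiff ℝ 1 F)
    (h : TendstoInMeasure μ (fun k x => ∇ F (v k x)) atTop (T + χ : Lp E ∞ μ)) {φ : α → E}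
    (hφ : Integrable φ μ) :
    Tendsto (fun k => ∫ x, ⟪∇ F (v k x) - T x, φ x⟫ ∂μ) atTop (𝓝 (∫ x, ⟪χ x, φ x⟫ ∂μ)) := by
  have hbound : ∀ k, ∀ᵐ x ∂μ, ‖∇ F (v k x)‖ ≤ L := fun k =>
    ae_of_all _ fun x => norm_gradient_le_of_lipschitzWith hF _
  have hmeas : ∀ k, AEStronglyMeasurable (fun x => ∇ F (v k x)) μ := fun k =>
    (continuous_gradient hC1).comp_aestronglyMeasurable (Lp.aestronglyMeasurable (v k))
  have hgrad : ∀ k, Integrable (fun x => ⟪∇ F (v k x), φ x⟫) μ := fun k =>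
    (hφ.norm.const_mul L).mono' ((hmeas k).inner hφ.1) <| (hbound k).mono fun x hx =>
      (norm_inner_le_norm _ _).trans (by gcongr)
  have hlim := (tendsto_integral_inner_of_tendstoInMeasure hmeas hbound h hφ).sub_const
    (∫ x, ⟪T x, φ x⟫ ∂μ)
  simp only [inner_sub_left, integral_sub (hgrad _) (integrable_inner_linfty T hφ)]
  convert hlim using 2
  rw [← integral_sub (integrable_inner_linfty _ hφ) (integrable_inner_linfty T hφ)]
  refine integral_congr_ae ((Lp.coeFn_add T χ).mono fun x hx => ?_)
  simp only [hx, Pi.add_apply, inner_add_left, add_sub_cancel_left]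

variable [IsFiniteMeasure μ]

theorem exists_half_mul_norm_sub_le_energy [FiniteDimensional ℝ E] (hF : LipschitzWith L F)
    (hrec : IsRecessionFunction F Finf) {δ : ℝ} (hδ : 0 < δ)
    (hT : ∀ᵐ x ∂μ, ∀ ξ, ‖ξ‖ = 1 → δ ≤ Finf ξ - ⟪T x, ξ⟫) :
    ∃ C, ∀ v : Lp E 1 μ, δ / 2 * ‖v‖ - C ≤ energy F T v := by
  obtain ⟨C, hC⟩ := hrec.exists_half_mul_norm_sub_le hF hδ
  refine ⟨C * μ.real univ, fun v => ?_⟩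
  have hv := L1.integrable_coeFn v
  calc δ / 2 * ‖v‖ - C * μ.real univ = ∫ x, (δ / 2 * ‖v x‖ - C) ∂μ := by
        rw [integral_sub (hv.norm.const_mul _) (integrable_const _), integral_const_mul,
          integral_const, smul_eq_mul, mul_comm C, L1.norm_eq_integral_norm]
    _ ≤ energy F T v :=
        integral_mono_ae ((hv.norm.const_mul _).sub (integrable_const _))
          (integrable_energy_density hF T hv) (hT.mono fun x hx => hC (T x) hx (v x))

theorem ofReal_sub_le_conjEnergy_of_tendsto (hF : LipschitzWith L F)
    (hχ : χ ∈ linftyAnnihilator V) (hv : ∀ k, v k ∈ V)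
    (hE : Tendsto (fun k => energy F T (v k)) atTop (𝓝 m)) :
    ENNReal.ofReal (F 0 * μ.real univ - m) ≤ conjEnergy F (T + χ) :=
  le_of_tendsto' (ENNReal.tendsto_ofReal (hE.const_sub _)) fun k =>
    ofReal_sub_energy_le_conjEnergy_of_mem hF T hχ (hv k)

theorem tendstoInMeasure_gradient_of_conjEnergy_eq [ProperSpace E] (hF : LipschitzWith L F)
    (hC1 : ContDiff ℝ 1 F) (hm : m ≤ F 0 * μ.real univ) (hχ : χ ∈ linftyAnnihilator V)
    (hopt : conjEnergy F (T + χ) = ENNReal.ofReal (F 0 * μ.real univ - m)) (hv : ∀ k, v k ∈ V)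
    {C : ℝ} (hC : ∀ k, ‖v k‖ ≤ C) (hE : Tendsto (fun k => energy F T (v k)) atTop (𝓝 m)) :
    TendstoInMeasure μ (fun k x => ∇ F (v k x)) atTop (T + χ : Lp E ∞ μ) := by
  refine tendstoInMeasure_gradient hF hC1 (hopt ▸ ENNReal.ofReal_ne_top) hC ?_
  rw [hopt, ENNReal.toReal_ofReal (sub_nonneg.2 hm), sub_sub_cancel]
  exact hE.congr fun k => (energy_add_left_of_mem hF T hχ (hv k)).symm

theorem exists_unique_conjEnergy_minimiser_tendsto_gradient [FiniteDimensional ℝ E]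
    (hF : LipschitzWith L F) (hC1 : ContDiff ℝ 1 F) (hconv : ConvexOn ℝ univ F)
    (hrec : IsRecessionFunction F Finf) {δ : ℝ} (hδ : 0 < δ)
    (hT : ∀ᵐ x ∂μ, ∀ ξ, ‖ξ‖ = 1 → δ ≤ Finf ξ - ⟪T x, ξ⟫) (hv : ∀ k, v k ∈ V)
    (hE : Tendsto (fun k => energy F T (v k)) atTop
      (𝓝 (sInf ((fun w : Lp E 1 μ => energy F T w) '' V)))) :
    ∃ σ ∈ linftyAnnihilator V,
      (∀ χ ∈ linftyAnnihilator V, conjEnergy F (T + σ) ≤ conjEnergy F (T + χ)) ∧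
      (∀ χ ∈ linftyAnnihilator V, conjEnergy F (T + χ) = conjEnergy F (T + σ) → χ = σ) ∧
      ∀ φ : α → E, Integrable φ μ →
        Tendsto (fun k => ∫ x, ⟪∇ F (v k x) - T x, φ x⟫ ∂μ) atTop (𝓝 (∫ x, ⟪σ x, φ x⟫ ∂μ)) := by
  have := FiniteDimensional.proper_real E
  set m := sInf ((fun w : Lp E 1 μ => energy F T w) '' V)
  obtain ⟨C, hC⟩ := exists_half_mul_norm_sub_le_energy hF hrec hδ hT
  obtain ⟨B, hB⟩ := exists_norm_le_of_tendsto_energy (half_pos hδ) hC hE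
  have hbdd : BddBelow ((fun w : Lp E 1 μ => energy F T w) '' V) := by
    refine ⟨-C, forall_mem_image.2 fun w _ => ?_⟩
    linarith [hC w, mul_nonneg (half_pos hδ).le (norm_nonneg w)]
  have hm : ∀ w ∈ V, m ≤ energy F T w := fun w hw => csInf_le hbdd (mem_image_of_mem _ hw)
  have hm₀ : m ≤ F 0 * μ.real univ := (hm 0 V.zero_mem).trans_eq (energy_zero F T)
  have hweak : ∀ χ ∈ linftyAnnihilator V,
      ENNReal.ofReal (F 0 * μ.real univ - m) ≤ conjEnergy F (T + χ) := fun χ hχ =>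
    ofReal_sub_le_conjEnergy_of_tendsto hF hχ hv hE
  obtain ⟨σ, hσ, hle⟩ := exists_mem_linftyAnnihilator_conjEnergy_le hF hconv T V hm
  have hopt := hle.antisymm (hweak σ hσ)
  have hlim := fun χ hχ hχopt =>
    tendstoInMeasure_gradient_of_conjEnergy_eq (χ := χ) hF hC1 hm₀ hχ hχopt hv hB hE
  refine ⟨σ, hσ, fun χ hχ => hle.trans (hweak χ hχ), fun χ hχ hχσ => ?_, fun φ hφ =>
    tendsto_integral_inner_gradient_sub hF hC1 (hlim σ hσ hopt) hφ⟩
  exact add_left_cancel (Lp.ext (tendstoInMeasure_ae_unique (hlim χ hχ (hχσ.trans hopt))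
    (hlim σ hσ hopt)))

end MinimisingSequence

section MatrixEuclidean

variable {ι κ : Type*} [Fintype ι] [Fintype κ]

/-- Matrices as vectors of the Euclidean space `ℝ^{ι × κ}`, which turns `mdot` and `mnorm` into
the Euclidean inner product and norm; the domain carries the supremum norm. -/
noncomputable def matrixEuclideanEquiv : (ι → κ → ℝ) ≃L[ℝ] EuclideanSpace ℝ (ι × κ) :=
  ((LinearEquiv.curry ℝ ℝ ι κ).symm ≪≫ₗ
    (WithLp.linearEquiv 2 ℝ (ι × κ → ℝ)).symm).toContinuousLinearEquiv

theorem matrixEuclideanEquiv_apply (A : ι → κ → ℝ) (p : ι × κ) :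
    matrixEuclideanEquiv A p = A p.1 p.2 :=
  rfl

theorem inner_matrixEuclideanEquiv (A B : ι → κ → ℝ) :
    ⟪matrixEuclideanEquiv A, matrixEuclideanEquiv B⟫ = mdot A B := by
  simp only [PiLp.inner_apply, matrixEuclideanEquiv_apply, Fintype.sum_prod_type, mdot,
    Real.inner_apply]

theorem norm_matrixEuclideanEquiv (A : ι → κ → ℝ) : ‖matrixEuclideanEquiv A‖ = mnorm A := by
  rw [norm_eq_sqrt_real_inner, inner_matrixEuclideanEquiv, mnorm]

end MatrixEuclidean

section MatrixIntegrand

variable {n N : ℕ} (F : (Fin N → Fin n → ℝ) → ℝ)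

theorem mdot_DFmat (z B : Fin N → Fin n → ℝ) : mdot (DFmat F z) B = fderiv ℝ F z B := by
  have hB : B = ∑ a, ∑ i, B a i • basisMat a i := by
    ext a i
    simp [basisMat, Finset.sum_apply, ite_and]
  conv_rhs => rw [hB]
  simp only [map_sum, map_smul, mdot, DFmat, smul_eq_mul, mul_comm]

theorem gradient_comp_matrixEuclideanEquiv_symm (z : Fin N → Fin n → ℝ) :
    ∇ (F ∘ matrixEuclideanEquiv.symm) (matrixEuclideanEquiv z) =
      matrixEuclideanEquiv (DFmat F z) := by
  refine ext_inner_right ℝ fun w => ?_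
  obtain ⟨B, rfl⟩ := matrixEuclideanEquiv.surjective w
  rw [inner_gradient_left, inner_matrixEuclideanEquiv, mdot_DFmat,
    (matrixEuclideanEquiv (ι := Fin N) (κ := Fin n)).symm.comp_right_fderiv]
  simp

theorem conjShift_comp_matrixEuclideanEquiv_symm (z : Fin N → Fin n → ℝ) :
    conjShift (F ∘ matrixEuclideanEquiv.symm) (matrixEuclideanEquiv z) = FstarShift F z :=
  (matrixEuclideanEquiv.toEquiv.iSup_congr fun w => by
    simp [inner_matrixEuclideanEquiv]).symm

variable {F}

theorem lipschitzWith_comp_matrixEuclideanEquiv_symm {L : ℝ} (hF : ConvexOn ℝ univ F)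
    (hle : ∀ z, F z ≤ L * (1 + mnorm z)) :
    LipschitzWith L.toNNReal (F ∘ matrixEuclideanEquiv.symm) := by
  refine lipschitzWith_of_convexOn_of_le (C := L.toNNReal)
    (hF.comp_linearMap matrixEuclideanEquiv.symm.toLinearEquiv.toLinearMap) fun z => ?_
  have h := hle (matrixEuclideanEquiv.symm z)
  rw [← norm_matrixEuclideanEquiv, matrixEuclideanEquiv.apply_symm_apply] at h
  have := mul_le_mul_of_nonneg_right (Real.le_coe_toNNReal L)
    (show 0 ≤ 1 + ‖z‖ by positivity)
  simp only [Function.comp_apply]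
  linarith

end MatrixIntegrand

section MatrixFields

variable {α ι κ : Type*} [MeasurableSpace α] {μ : Measure α} [Fintype ι] [Fintype κ]

theorem integral_inner_eq_integral_mdot {ζ v : α → EuclideanSpace ℝ (ι × κ)}
    {X Y : α → ι → κ → ℝ} (hζ : ζ =ᵐ[μ] fun x => matrixEuclideanEquiv (X x))
    (hv : v =ᵐ[μ] fun x => matrixEuclideanEquiv (Y x)) :
    ∫ x, ⟪ζ x, v x⟫ ∂μ = ∫ x, mdot (X x) (Y x) ∂μ := by
  refine integral_congr_ae ?_
  filter_upwards [hζ, hv] with x hζx hvx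
  rw [hζx, hvx, inner_matrixEuclideanEquiv]

theorem exists_linfty_ae_eq {X : α → ι → κ → ℝ} (hX : AEStronglyMeasurable X μ) {C : ℝ}
    (hC : ∀ᵐ x ∂μ, mnorm (X x) ≤ C) :
    ∃ ζ : Lp (EuclideanSpace ℝ (ι × κ)) ∞ μ, ζ =ᵐ[μ] fun x => matrixEuclideanEquiv (X x) := by
  have hmem : MemLp (fun x => matrixEuclideanEquiv (X x)) ∞ μ :=
    memLp_top_of_bound (matrixEuclideanEquiv.continuous.comp_aestronglyMeasurable hX) C
      (by simpa only [norm_matrixEuclideanEquiv] using hC)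
  exact ⟨hmem.toLp _, hmem.coeFn_toLp⟩

theorem ae_norm_le_linfty_norm {E : Type*} [NormedAddCommGroup E] (ζ : Lp E ∞ μ) :
    ∀ᵐ x ∂μ, ‖ζ x‖ ≤ ‖ζ‖ := by
  filter_upwards [enorm_ae_le_eLpNormEssSup ζ μ] with x hx
  rw [← eLpNorm_exponent_top] at hx
  exact (toReal_enorm (ζ x)).symm.trans_le (ENNReal.toReal_mono (Lp.eLpNorm_ne_top ζ) hx)

theorem exists_bounded_matrixField_ae_eq (ζ : Lp (EuclideanSpace ℝ (ι × κ)) ∞ μ) :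
    ∃ X : α → ι → κ → ℝ, AEStronglyMeasurable X μ ∧ (∃ C, ∀ x, mnorm (X x) ≤ C) ∧
      ζ =ᵐ[μ] fun x => matrixEuclideanEquiv (X x) := by
  let s : Set α := {x | ‖ζ x‖ ≤ ‖ζ‖}
  have hζ : ζ =ᵐ[μ] s.indicator ζ :=
    (ae_norm_le_linfty_norm ζ).mono fun x hx => (indicator_of_mem (s := s) hx _).symm
  refine ⟨fun x => matrixEuclideanEquiv.symm (s.indicator ζ x),
    matrixEuclideanEquiv.symm.continuous.comp_aestronglyMeasurable
      ((Lp.aestronglyMeasurable ζ).congr hζ), ⟨‖ζ‖, fun x => ?_⟩, by simpa using hζ⟩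
  rw [← norm_matrixEuclideanEquiv, matrixEuclideanEquiv.apply_symm_apply]
  by_cases hx : x ∈ s
  · rwa [indicator_of_mem hx]
  · simp [indicator_of_notMem hx]

end MatrixFields

section WeakGradients

namespace HasWeakDerivOn

variable {n : ℕ} {ι : Type*} [Fintype ι] {Ω : Set (EVec n)} {u w : EVec n → ι → ℝ}
  {Du Dw : EVec n → ι → Fin n → ℝ}

theorem integrable_mul_fderiv (hu : HasWeakDerivOn Ω u Du) {φ : EVec n → ℝ}
    (hφ : ContDiff ℝ 1 φ) (hsupp : HasCompactSupport φ) (a : ι) (e : EVec n) :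
    IntegrableOn (fun x => u x a * fderiv ℝ φ x e) Ω := by
  have hcont : Continuous fun x => fderiv ℝ φ x e :=
    (hφ.continuous_fderiv one_ne_zero).clm_apply continuous_const
  obtain ⟨C, hC⟩ := (hsupp.fderiv_apply ℝ e).exists_bound_of_continuous hcont
  exact (hu.1.eval a).mul_bdd hcont.aestronglyMeasurable (ae_of_all _ hC)

theorem integrable_gradient_mul (hu : HasWeakDerivOn Ω u Du) {φ : EVec n → ℝ}
    (hφ : Continuous φ) (hsupp : HasCompactSupport φ) (a : ι) (i : Fin n) :
    IntegrableOn (fun x => Du x a i * φ x) Ω := by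
  obtain ⟨C, hC⟩ := hsupp.exists_bound_of_continuous hφ
  exact ((hu.2.1.eval a).eval i).mul_bdd hφ.aestronglyMeasurable (ae_of_all _ hC)

theorem zero : HasWeakDerivOn Ω (0 : EVec n → ι → ℝ) 0 :=
  ⟨integrableOn_zero, integrableOn_zero, fun φ _ _ _ a i => by simp⟩

theorem add (hu : HasWeakDerivOn Ω u Du) (hw : HasWeakDerivOn Ω w Dw) :
    HasWeakDerivOn Ω (u + w) (Du + Dw) := by
  refine ⟨hu.1.add hw.1, hu.2.1.add hw.2.1, fun φ hφ hc hs a i => ?_⟩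
  simp only [Pi.add_apply, add_mul]
  rw [integral_add (hu.integrable_mul_fderiv hφ hc a _) (hw.integrable_mul_fderiv hφ hc a _),
    integral_add (hu.integrable_gradient_mul hφ.continuous hc a i)
      (hw.integrable_gradient_mul hφ.continuous hc a i),
    hu.2.2 φ hφ hc hs a i, hw.2.2 φ hφ hc hs a i, neg_add]

theorem const_smul (hu : HasWeakDerivOn Ω u Du) (c : ℝ) :
    HasWeakDerivOn Ω (c • u) (c • Du) := by
  refine ⟨hu.1.smul c, hu.2.1.smul c, fun φ hφ hc hs a i => ?_⟩
  simp only [Pi.smul_apply, smul_eq_mul, mul_assoc]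
  rw [integral_const_mul, integral_const_mul, hu.2.2 φ hφ hc hs a i, mul_neg]

end HasWeakDerivOn

variable {n : ℕ} {ι : Type*} [Fintype ι] {Ω : Set (EVec n)}

/-- The subspace of `L¹(Ω; ℝ^{ι × n})` formed by the weak gradients of `W^{1,1}(Ω; ℝ^ι)`
functions, with matrices read as Euclidean vectors. -/
noncomputable def weakGradients (ι : Type*) [Fintype ι] (Ω : Set (EVec n)) :
    Submodule ℝ (Lp (EuclideanSpace ℝ (ι × Fin n)) 1 (volume.restrict Ω)) where
  carrier := {v | ∃ (w : EVec n → ι → ℝ) (Dw : EVec n → ι → Fin n → ℝ),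
    HasWeakDerivOn Ω w Dw ∧ v =ᵐ[volume.restrict Ω] fun x => matrixEuclideanEquiv (Dw x)}
  zero_mem' := ⟨0, 0, .zero, (Lp.coeFn_zero _ _ _).trans (.of_eq (by ext1; simp))⟩
  add_mem' := by
    rintro v v' ⟨w, Dw, hw, hv⟩ ⟨w', Dw', hw', hv'⟩
    refine ⟨_, _, hw.add hw', (Lp.coeFn_add v v').trans ((hv.add hv').trans (.of_eq ?_))⟩
    ext1; simp
  smul_mem' := by
    rintro c v ⟨w, Dw, hw, hv⟩
    refine ⟨_, _, hw.const_smul c,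
      (Lp.coeFn_smul c v).trans ((hv.const_smul c).trans (.of_eq ?_))⟩
    ext1; simp

theorem HasWeakDerivOn.exists_mem_weakGradients {u : EVec n → ι → ℝ}
    {Du : EVec n → ι → Fin n → ℝ} (hu : HasWeakDerivOn Ω u Du) :
    ∃ v ∈ weakGradients ι Ω, v =ᵐ[volume.restrict Ω] fun x => matrixEuclideanEquiv (Du x) := by
  have hint : Integrable (fun x => matrixEuclideanEquiv (Du x)) (volume.restrict Ω) :=
    matrixEuclideanEquiv.toContinuousLinearMap.integrable_comp hu.2.1
  exact ⟨hint.toL1 _, ⟨u, Du, hu, hint.coeFn_toL1⟩, hint.coeFn_toL1⟩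

theorem mem_linftyAnnihilator_weakGradients_iff
    {ζ : Lp (EuclideanSpace ℝ (ι × Fin n)) ∞ (volume.restrict Ω)} {X : EVec n → ι → Fin n → ℝ}
    (hζ : ζ =ᵐ[volume.restrict Ω] fun x => matrixEuclideanEquiv (X x)) :
    ζ ∈ linftyAnnihilator (weakGradients ι Ω) ↔
      ∀ w Dw, HasWeakDerivOn Ω w Dw → ∫ x in Ω, mdot (X x) (Dw x) = 0 := by
  constructor
  · intro h w Dw hw
    obtain ⟨v, hvV, hv⟩ := hw.exists_mem_weakGradients
    rw [← integral_inner_eq_integral_mdot hζ hv, ← linftyPairing_apply, h v hvV]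
  · rintro h v ⟨w, Dw, hw, hv⟩
    rw [linftyPairing_apply, integral_inner_eq_integral_mdot hζ hv, h w Dw hw]

end WeakGradients

theorem ereal_coe_sub_le_coe_sub_iff (c : ℝ) {a b : EReal} :
    (c : EReal) - a ≤ c - b ↔ b ≤ a := by
  refine ⟨fun h => ?_, EReal.sub_le_sub le_rfl⟩
  simpa only [sub_eq_add_neg (c : EReal) a, sub_eq_add_neg (c : EReal) b,
    EReal.sub_add_cancel_left, neg_neg] using EReal.sub_le_sub (le_refl (c : EReal)) h

section MatrixDuality

variable {n N : ℕ} {Ω : Set (EVec n)}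

theorem MemLinfPerp.exists_mem_linftyAnnihilator {χ : EVec n → Fin N → Fin n → ℝ}
    (hχ : MemLinfPerp Ω χ) (hΩ : MeasurableSet Ω) :
    ∃ ζ ∈ linftyAnnihilator (weakGradients (Fin N) Ω),
      ζ =ᵐ[volume.restrict Ω] fun x => matrixEuclideanEquiv (χ x) := by
  obtain ⟨hmeas, ⟨C, hC⟩, hperp⟩ := hχ
  obtain ⟨ζ, hζ⟩ := exists_linfty_ae_eq hmeas (ae_restrict_of_forall_mem hΩ hC)
  exact ⟨ζ, (mem_linftyAnnihilator_weakGradients_iff hζ).2 hperp, hζ⟩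

theorem exists_memLinfPerp_ae_eq
    {ζ : Lp (EuclideanSpace ℝ (Fin N × Fin n)) ∞ (volume.restrict Ω)}
    (hζ : ζ ∈ linftyAnnihilator (weakGradients (Fin N) Ω)) :
    ∃ χ, MemLinfPerp Ω χ ∧ ζ =ᵐ[volume.restrict Ω] fun x => matrixEuclideanEquiv (χ x) := by
  obtain ⟨χ, hmeas, ⟨C, hC⟩, hχ⟩ := exists_bounded_matrixField_ae_eq ζ
  exact ⟨χ, ⟨hmeas, ⟨C, fun x _ => hC x⟩, (mem_linftyAnnihilator_weakGradients_iff hχ).1 hζ⟩, hχ⟩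

variable {T ζ : Lp (EuclideanSpace ℝ (Fin N × Fin n)) ∞ (volume.restrict Ω)}
  {T₀ χ : EVec n → Fin N → Fin n → ℝ}

theorem energy_comp_matrixEuclideanEquiv_symm (F : (Fin N → Fin n → ℝ) → ℝ)
    (hT : T =ᵐ[volume.restrict Ω] fun x => matrixEuclideanEquiv (T₀ x))
    {v : EVec n → EuclideanSpace ℝ (Fin N × Fin n)} {Dw : EVec n → Fin N → Fin n → ℝ}
    (hv : v =ᵐ[volume.restrict Ω] fun x => matrixEuclideanEquiv (Dw x)) :
    energy (F ∘ matrixEuclideanEquiv.symm) T v = FFgen Ω F T₀ Dw := by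
  refine integral_congr_ae ?_
  filter_upwards [hT, hv] with x hTx hvx
  simp [hTx, hvx, inner_matrixEuclideanEquiv]

theorem ae_coercive_comp_matrixEuclideanEquiv_symm {Finf : (Fin N → Fin n → ℝ) → ℝ} {δ : ℝ}
    (hT : T =ᵐ[volume.restrict Ω] fun x => matrixEuclideanEquiv (T₀ x))
    (hδ : ∀ᵐ x ∂volume.restrict Ω, ∀ ξ, mnorm ξ = 1 → δ ≤ Finf ξ - mdot (T₀ x) ξ) :
    ∀ᵐ x ∂volume.restrict Ω, ∀ ξ, ‖ξ‖ = 1 →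
      δ ≤ (Finf ∘ matrixEuclideanEquiv.symm) ξ - ⟪T x, ξ⟫ := by
  filter_upwards [hT, hδ] with x hTx hδx ξ hξ
  obtain ⟨A, rfl⟩ := matrixEuclideanEquiv.surjective ξ
  rw [norm_matrixEuclideanEquiv] at hξ
  simpa [hTx, inner_matrixEuclideanEquiv] using hδx A hξ

theorem image_energy_weakGradients (F : (Fin N → Fin n → ℝ) → ℝ)
    (hT : T =ᵐ[volume.restrict Ω] fun x => matrixEuclideanEquiv (T₀ x)) :
    (fun v : Lp _ 1 (volume.restrict Ω) => energy (F ∘ matrixEuclideanEquiv.symm) T v) ''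
        weakGradients (Fin N) Ω =
      {r | ∃ w Dw, HasWeakDerivOn Ω w Dw ∧ r = FFgen Ω F T₀ Dw} := by
  ext r
  constructor
  · rintro ⟨v, ⟨w, Dw, hw, hv⟩, rfl⟩
    exact ⟨w, Dw, hw, energy_comp_matrixEuclideanEquiv_symm F hT hv⟩
  · rintro ⟨w, Dw, hw, rfl⟩
    obtain ⟨v, hvV, hv⟩ := hw.exists_mem_weakGradients
    exact ⟨v, hvV, energy_comp_matrixEuclideanEquiv_symm F hT hv⟩

theorem Rdual_eq_sub_conjEnergy (F : (Fin N → Fin n → ℝ) → ℝ)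
    (hT : T =ᵐ[volume.restrict Ω] fun x => matrixEuclideanEquiv (T₀ x))
    (hζ : ζ =ᵐ[volume.restrict Ω] fun x => matrixEuclideanEquiv (χ x)) :
    Rdual Ω F T₀ χ = ((F 0 * (volume Ω).toReal : ℝ) : EReal) -
      (conjEnergy (F ∘ matrixEuclideanEquiv.symm) (T + ζ) : ℝ≥0∞) := by
  have hlintegral : ∫⁻ x in Ω, FstarShift F (T₀ x + χ x) =
      conjEnergy (F ∘ matrixEuclideanEquiv.symm) (T + ζ) := by
    refine lintegral_congr_ae ?_
    filter_upwards [hT, hζ, Lp.coeFn_add T ζ] with x hTx hζx hadd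
    rw [hadd, Pi.add_apply, hTx, hζx, ← map_add, conjShift_comp_matrixEuclideanEquiv_symm]
  rw [Rdual, hlintegral]

theorem Rdual_le_Rdual_iff {F : (Fin N → Fin n → ℝ) → ℝ}
    {η : Lp (EuclideanSpace ℝ (Fin N × Fin n)) ∞ (volume.restrict Ω)}
    {ψ : EVec n → Fin N → Fin n → ℝ}
    (hT : T =ᵐ[volume.restrict Ω] fun x => matrixEuclideanEquiv (T₀ x))
    (hζ : ζ =ᵐ[volume.restrict Ω] fun x => matrixEuclideanEquiv (χ x))
    (hη : η =ᵐ[volume.restrict Ω] fun x => matrixEuclideanEquiv (ψ x)) :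
    Rdual Ω F T₀ χ ≤ Rdual Ω F T₀ ψ ↔
      conjEnergy (F ∘ matrixEuclideanEquiv.symm) (T + η) ≤
        conjEnergy (F ∘ matrixEuclideanEquiv.symm) (T + ζ) := by
  rw [Rdual_eq_sub_conjEnergy F hT hζ, Rdual_eq_sub_conjEnergy F hT hη,
    ereal_coe_sub_le_coe_sub_iff, EReal.coe_ennreal_le_coe_ennreal_iff]

theorem integral_inner_gradient_sub (F : (Fin N → Fin n → ℝ) → ℝ)
    (hT : T =ᵐ[volume.restrict Ω] fun x => matrixEuclideanEquiv (T₀ x))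
    {v : EVec n → EuclideanSpace ℝ (Fin N × Fin n)} {Dw g : EVec n → Fin N → Fin n → ℝ}
    (hv : v =ᵐ[volume.restrict Ω] fun x => matrixEuclideanEquiv (Dw x)) :
    ∫ x in Ω, ⟪∇ (F ∘ matrixEuclideanEquiv.symm) (v x) - T x, matrixEuclideanEquiv (g x)⟫ =
      ∫ x in Ω, mdot (DFmat F (Dw x) - T₀ x) (g x) := by
  refine integral_inner_eq_integral_mdot ?_ .rfl
  filter_upwards [hT, hv] with x hTx hvx
  rw [hTx, hvx, gradient_comp_matrixEuclideanEquiv_symm, map_sub]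

end MatrixDuality

theorem minimising_sequence_dual_convergence_general
    {n N : ℕ} {Ω : Set (EVec n)} (hΩ : MeasurableSet Ω) (hΩfin : volume Ω ≠ ∞) {L : ℝ}
    {F Finf : (Fin N → Fin n → ℝ) → ℝ} (hFC1 : ContDiff ℝ 1 F) (hFconv : ConvexOn ℝ univ F)
    (hFle : ∀ z, F z ≤ L * (1 + mnorm z)) (hFinf : IsRecessionFunction F Finf)
    {T₀ : EVec n → Fin N → Fin n → ℝ} (hTmeas : AEStronglyMeasurable T₀ (volume.restrict Ω))
    (hTbdd : ∃ M, ∀ x ∈ Ω, mnorm (T₀ x) ≤ M)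
    (hcoerc : ∃ δ₀ : ℝ, 0 < δ₀ ∧ ∀ᵐ x ∂volume.restrict Ω,
      ∀ ξ, mnorm ξ = 1 → δ₀ ≤ Finf ξ - mdot (T₀ x) ξ)
    {u : ℕ → EVec n → Fin N → ℝ} {Du : ℕ → EVec n → Fin N → Fin n → ℝ}
    (hu : ∀ k, HasWeakDerivOn Ω (u k) (Du k))
    (hminseq : Tendsto (fun k => FFgen Ω F T₀ (Du k)) atTop
      (𝓝 (sInf {r | ∃ w Dw, HasWeakDerivOn Ω w Dw ∧ r = FFgen Ω F T₀ Dw}))) :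
    ∃ σ, MemLinfPerp Ω σ ∧ (∀ χ, MemLinfPerp Ω χ → Rdual Ω F T₀ χ ≤ Rdual Ω F T₀ σ) ∧
      (∀ χ, MemLinfPerp Ω χ → Rdual Ω F T₀ χ = Rdual Ω F T₀ σ → χ =ᵐ[volume.restrict Ω] σ) ∧
      ∀ g, IntegrableOn g Ω → Tendsto (fun k => ∫ x in Ω, mdot (DFmat F (Du k x) - T₀ x) (g x))
        atTop (𝓝 (∫ x in Ω, mdot (σ x) (g x))) := by
  have : IsFiniteMeasure (volume.restrict Ω) := isFiniteMeasure_restrict.2 hΩfin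
  obtain ⟨M, hM⟩ := hTbdd
  obtain ⟨δ, hδ, hcoerc⟩ := hcoerc
  obtain ⟨T, hT⟩ := exists_linfty_ae_eq hTmeas (ae_restrict_of_forall_mem hΩ hM)
  choose v hvV hv using fun k => (hu k).exists_mem_weakGradients
  obtain ⟨ζ, hζV, hmin, huniq, hlim⟩ := exists_unique_conjEnergy_minimiser_tendsto_gradient
    (T := T)
    (lipschitzWith_comp_matrixEuclideanEquiv_symm hFconv hFle)
    (hFC1.comp (matrixEuclideanEquiv (ι := Fin N) (κ := Fin n)).symm.contDiff)
    (hFconv.comp_linearMap matrixEuclideanEquiv.symm.toLinearEquiv.toLinearMap)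
    (hFinf.comp_linearMap matrixEuclideanEquiv.symm.toLinearEquiv.toLinearMap) hδ
    (ae_coercive_comp_matrixEuclideanEquiv_symm hT hcoerc) hvV
    (by simpa only [image_energy_weakGradients F hT,
      energy_comp_matrixEuclideanEquiv_symm F hT (hv _)] using hminseq)
  obtain ⟨σ, hσ, hζσ⟩ := exists_memLinfPerp_ae_eq hζV
  refine ⟨σ, hσ, fun χ hχ => ?_, fun χ hχ heq => ?_, fun g hg => ?_⟩
  · obtain ⟨η, hηV, hη⟩ := hχ.exists_mem_linftyAnnihilator hΩ
    exact (Rdual_le_Rdual_iff hT hη hζσ).2 (hmin η hηV)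
  · obtain ⟨η, hηV, hη⟩ := hχ.exists_mem_linftyAnnihilator hΩ
    have hηζ : η = ζ := huniq η hηV <| le_antisymm
      ((Rdual_le_Rdual_iff hT hζσ hη).1 heq.ge) ((Rdual_le_Rdual_iff hT hη hζσ).1 heq.le)
    filter_upwards [hη, hζσ] with x hηx hζx
    exact matrixEuclideanEquiv.injective (by rw [← hηx, hηζ, hζx])
  · have hlim := hlim _ (matrixEuclideanEquiv.toContinuousLinearMap.integrable_comp hg)
    simpa only [ContinuousLinearEquiv.coe_coe, integral_inner_gradient_sub F hT (hv _),
      integral_inner_eq_integral_mdot hζσ .rfl] using hlim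

/-- **Lemma 4.11.** Under the coerciveness condition, for any minimising sequence
`(u_k)` of `𝓕` in `W^{1,1}(Ω;ℝ^N)` the stresses `D_zF(∇u_k) − T₀` converge weakly-* in
`L^∞(Ω;ℝ^{N×n})` to the unique maximiser `σ` of the dual functional
`ℛ_{T₀}[χ] = −∫_Ω F*(T₀+χ) dx` over `L^∞_⊥(Ω;ℝ^{N×n})`. -/
theorem minimising_sequence_dual_convergence
    {n N : ℕ} (Ω : Set (EVec n))
    (hΩ : IsLipschitzDomain Ω) (hΩbdd : Bornology.IsBounded Ω)
    (ν L : ℝ) (hν : 0 < ν) (hνL : ν ≤ L)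
    (F : (Fin N → Fin n → ℝ) → ℝ)
    (hFpos : ∀ z, 0 ≤ F z)
    (hFC1 : ContDiff ℝ 1 F)
    (hFconv : ConvexOn ℝ Set.univ F)
    (hFgrowth : ∀ z, ν * mnorm z - L ≤ F z ∧ F z ≤ L * (1 + mnorm z))
    (Finf : (Fin N → Fin n → ℝ) → ℝ)
    (hFinf : ∀ z, Filter.Tendsto (fun t : ℝ => t * F (t⁻¹ • z))
      (nhdsWithin 0 (Set.Ioi 0)) (nhds (Finf z)))
    (T₀ : EVec n → Fin N → Fin n → ℝ)
    (hTmeas : AEStronglyMeasurable T₀ (volume.restrict Ω))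
    (hTbdd : ∃ M : ℝ, ∀ x ∈ Ω, mnorm (T₀ x) ≤ M)
    -- coerciveness: `ess inf_{x∈Ω} min_{|ξ|=1} (F^∞(ξ) − T₀(x)·ξ) > 0`
    (hcoerc : ∃ δ₀ : ℝ, 0 < δ₀ ∧ ∀ᵐ x ∂(volume.restrict Ω),
      ∀ ξ : Fin N → Fin n → ℝ, mnorm ξ = 1 → δ₀ ≤ Finf ξ - mdot (T₀ x) ξ)
    (u : ℕ → EVec n → Fin N → ℝ) (Du : ℕ → EVec n → Fin N → Fin n → ℝ)
    (hu : ∀ k, HasWeakDerivOn Ω (u k) (Du k))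
    -- `(u_k)` is a minimising sequence for `𝓕` in `W^{1,1}(Ω;ℝ^N)`
    (hminseq : Filter.Tendsto (fun k => FFgen Ω F T₀ (Du k)) Filter.atTop
      (nhds (sInf {r : ℝ | ∃ (w : EVec n → Fin N → ℝ)
        (Dw : EVec n → Fin N → Fin n → ℝ),
        HasWeakDerivOn Ω w Dw ∧ r = FFgen Ω F T₀ Dw}))) :
    ∃ σ : EVec n → Fin N → Fin n → ℝ, MemLinfPerp Ω σ ∧
      (∀ χ : EVec n → Fin N → Fin n → ℝ, MemLinfPerp Ω χ →
        Rdual Ω F T₀ χ ≤ Rdual Ω F T₀ σ) ∧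
      (∀ χ : EVec n → Fin N → Fin n → ℝ, MemLinfPerp Ω χ →
        Rdual Ω F T₀ χ = Rdual Ω F T₀ σ → χ =ᵐ[volume.restrict Ω] σ) ∧
      -- weak-* convergence in `L^∞(Ω;ℝ^{N×n})`, tested against all of `L¹(Ω;ℝ^{N×n})`
      ∀ g : EVec n → Fin N → Fin n → ℝ, IntegrableOn g Ω volume →
        Filter.Tendsto
          (fun k => ∫ x in Ω, mdot (DFmat F (Du k x) - T₀ x) (g x))
          Filter.atTop (nhds (∫ x in Ω, mdot (σ x) (g x))) :=
  minimising_sequence_dual_convergence_general hΩ.1.measurableSet hΩbdd.measure_lt_top.ne hFC1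
    hFconv (fun z => (hFgrowth z).2) hFinf hTmeas hTbdd hcoerc hu hminseq
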